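/- Let T and T′ be r-row rectangular fluctuating tableaux of the same type c = (c_1,…,c_n) with t := Σ_j |c_j| ≥ 1. If prom_i(T) = prom_i(T′) for all 1 ≤ i ≤ ⌊r/2⌋, then T = T′. -/

import Mathlib

open scoped Classical

noncomputable section

namespace FT

/-- A (raw) `r`-row integer vector; generalized partitions are the antitone ones. -/
abbrev GP (r : ℕ) := Fin r → ℤ

/-- The weakly decreasing rearrangement of a tuple. -/
def sortDesc {r : ℕ} (α : GP r) : GP r := fun i => (α ∘ Tuple.sort α) i.rev

/-- Standard basis vector (0-indexed). -/
def eV {r : ℕ} (a : Fin r) : GP r := fun i => if i = a then 1 else 0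

/-- Standard basis vector with 1-indexed row `a` (zero if out of range). -/
def eN (r : ℕ) (a : ℕ) : GP r := fun i => if (i : ℕ) + 1 = a then 1 else 0

/-- Indicator vector of a set of rows. -/
def indV {r : ℕ} (S : Finset (Fin r)) : GP r := fun i => if i ∈ S then 1 else 0

/-- `colStep r c μ λ`: `λ` is obtained from `μ` by adding (if `c ≥ 0`) or removing
(if `c ≤ 0`) a skew column of `|c|` boxes. -/
def colStep (r : ℕ) (c : ℤ) (μ lam : GP r) : Prop :=
  ∃ S : Finset (Fin r), S.card = c.natAbs ∧
    (if 0 ≤ c then lam = μ + indV S else lam = μ - indV S)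

/-- Skew fluctuating tableau of length `n` and type `c` (recorded at indices `0,…,n`;
values of `T` and `c` beyond those indices are irrelevant). -/
def IsSkewFT (r n : ℕ) (T : ℕ → GP r) (c : ℕ → ℤ) : Prop :=
  (∀ k ≤ n, Antitone (T k)) ∧ ∀ j < n, colStep r (c j) (T j) (T (j + 1))

/-- (Non-skew) fluctuating tableau: starts at the empty shape. -/
def IsFT (r n : ℕ) (T : ℕ → GP r) (c : ℕ → ℤ) : Prop :=
  IsSkewFT r n T c ∧ T 0 = 0

/-- Rectangular: the final shape is constant. -/
def Rect (r n : ℕ) (T : ℕ → GP r) : Prop := ∃ m : ℤ, ∀ i, T n i = m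

/-- Bender–Knuth involution `BK_i` (for `1 ≤ i ≤ n-1`). -/
def BK {r : ℕ} (i : ℕ) (T : ℕ → GP r) : ℕ → GP r :=
  fun k => if k = i then sortDesc (T (i + 1) + T (i - 1) - T i) else T k

/-- `BKseg a m = BK (a+m-1) ∘ ⋯ ∘ BK a` (apply `BK a` first). -/
def BKseg {r : ℕ} (a : ℕ) : ℕ → (ℕ → GP r) → ℕ → GP r
  | 0 => id
  | m + 1 => BK (a + m) ∘ BKseg a m

/-- Promotion `P = BK_{n-1} ∘ ⋯ ∘ BK_1` on length-`n` tableaux. -/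
def promo {r : ℕ} (n : ℕ) (T : ℕ → GP r) : ℕ → GP r := BKseg 1 (n - 1) T

/-- `BKsegRev a m = BK a ∘ ⋯ ∘ BK (a+m-1)` (apply `BK (a+m-1)` first). -/
def BKsegRev {r : ℕ} (a : ℕ) : ℕ → (ℕ → GP r) → ℕ → GP r
  | 0 => id
  | m + 1 => BKsegRev a m ∘ BK (a + m)

/-- Inverse of promotion: `P⁻¹ = BK_1 ∘ ⋯ ∘ BK_{n-1}`. -/
def promoInv {r : ℕ} (n : ℕ) (T : ℕ → GP r) : ℕ → GP r := BKsegRev 1 (n - 1) T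

def evacAux {r : ℕ} : ℕ → (ℕ → GP r) → ℕ → GP r
  | 0, T => T
  | m + 1, T => evacAux m (BKseg 1 (m + 1) T)

/-- Evacuation `E = BK_1 ∘ (BK_2∘BK_1) ∘ ⋯ ∘ (BK_{n-1}∘⋯∘BK_1)`. -/
def evac {r : ℕ} (n : ℕ) (T : ℕ → GP r) : ℕ → GP r := evacAux (n - 1) T

def devacAux {r : ℕ} (n : ℕ) : ℕ → (ℕ → GP r) → ℕ → GP r
  | 0, T => T
  | m + 1, T => BKseg (n - (m + 1)) (m + 1) (devacAux n m T)

/-- Dual evacuation `E* = (BK_{n-1}∘⋯∘BK_1) ∘ (BK_{n-1}∘⋯∘BK_2) ∘ ⋯ ∘ BK_{n-1}`. -/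
def devac {r : ℕ} (n : ℕ) (T : ℕ → GP r) : ℕ → GP r := devacAux n (n - 1) T

/-- `rev(-v)`. -/
def revNeg {r : ℕ} (v : GP r) : GP r := fun i => - v i.rev

/-- Time reversal `τ`. -/
def tauT {r : ℕ} (n : ℕ) (T : ℕ → GP r) : ℕ → GP r := fun k => T (n - k)

/-- `ϖ`. -/
def varpiT {r : ℕ} (T : ℕ → GP r) : ℕ → GP r := fun k => revNeg (T k)

/-- `ε`. -/
def epsT {r : ℕ} (n : ℕ) (T : ℕ → GP r) : ℕ → GP r := fun k => revNeg (T (n - k))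

/-- Sign of the `j`-th step of `T` (paper indexing: step `j` goes from `λ^{j-1}` to `λ^j`). -/
def sgnStep {r : ℕ} (T : ℕ → GP r) (j : ℕ) : ℤ :=
  if T j = T (j - 1) then 0 else if T (j - 1) ≤ T j then 1 else -1

/-- The switch involution `toggle_j` (paper indexing, `1 ≤ j ≤ n`). -/
def toggleT {r : ℕ} (j : ℕ) (T : ℕ → GP r) : ℕ → GP r :=
  fun m => if m < j then T m else fun i => T m i - sgnStep T j

/-- Number of boxes added/removed in the step from `T j` to `T (j+1)`. -/
def stepSize {r : ℕ} (T : ℕ → GP r) (j : ℕ) : ℕ :=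
  (Finset.univ.filter fun i : Fin r => T (j + 1) i ≠ T j i).card

/-- Cumulative step sizes: position of `T j` inside the oscillization. -/
def cum {r : ℕ} (T : ℕ → GP r) (j : ℕ) : ℕ := ∑ j' ∈ Finset.range j, stepSize T j'

/-- The `j`-th intermediate shape of the oscillization of the skew-column step `μ → λ`:
boxes are added smallest-row-first and removed largest-row-first. -/
def oscStep {r : ℕ} (μ lam : GP r) (j : ℕ) : GP r := fun i =>
  let S := Finset.univ.filter fun i' : Fin r => lam i' ≠ μ i'
  if i ∈ S ∧ (if μ i < lam i then (S.filter fun i' => i' ≤ i).card ≤ j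
              else (S.filter fun i' => i ≤ i').card ≤ j)
  then lam i else μ i

/-- Largest index `j ≤ n` with `cum T j ≤ k`. -/
def stdIdx {r : ℕ} (n : ℕ) (T : ℕ → GP r) (k : ℕ) : ℕ :=
  ((Finset.range (n + 1)).filter fun j => cum T j ≤ k).sup id

/-- The oscillization `std(T)` of a length-`n` tableau, a tableau of length `t = Σ|c_j|`. -/
def stdT {r : ℕ} (n : ℕ) (T : ℕ → GP r) : ℕ → GP r := fun k =>
  if stdIdx n T k = n then T n
  else oscStep (T (stdIdx n T k)) (T (stdIdx n T k + 1)) (k - cum T (stdIdx n T k))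

/-- Rows of the promotion–evacuation growth diagram: `PE t S u` is `P^u(S)`
for a length-`t` (oscillating) tableau `S`. -/
def PE {r : ℕ} (t : ℕ) (S : ℕ → GP r) (u : ℕ) : ℕ → GP r := (promo t)^[u] S

/-- `i ∈ {1,…,r-1}` is recorded at cell `(u,v)` of the growth diagram of `S`
(rows 1-indexed; `λ^{u,v} = P^u(S)(v-u)`). -/
def recorded (r t : ℕ) (S : ℕ → GP r) (i u v : ℕ) : Prop :=
  ∃ a b : Fin r,
    (PE t S (u - 1) (v - u) = PE t S u (v - u - 1) + eV a ∧
     PE t S (u - 1) (v - u + 1) = PE t S u (v - u) + eV b ∧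
     (a : ℕ) < i ∧ i ≤ (b : ℕ))
    ∨
    (PE t S u (v - u - 1) = PE t S (u - 1) (v - u) + eV a ∧
     PE t S u (v - u) = PE t S (u - 1) (v - u + 1) + eV b ∧
     (b : ℕ) < i ∧ i ≤ (a : ℕ))

/-- `i ∈ PM(T)_{u,v}` for an off-diagonal entry of the promotion matrix of `T`
(`u, v ∈ {1,…,t}`, `1 ≤ i ≤ r-1`), using the oscillization `std(T)`. -/
def PMmem (r n t : ℕ) (T : ℕ → GP r) (i u v : ℕ) : Prop :=
  1 ≤ u ∧ u ≤ t ∧ 1 ≤ v ∧ v ≤ t ∧ u ≠ v ∧ 1 ≤ i ∧ i ≤ r - 1 ∧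
    recorded r t (stdT n T) i u (if u < v then v else v + t)

/-- Graph of the partial promotion function `prom_i(T)`: `prom_i(T)(u) = v`.
By convention `prom_0 = prom_r = id` on `{1,…,t}`. -/
def promRel (r n t : ℕ) (T : ℕ → GP r) (i u v : ℕ) : Prop :=
  if i = 0 ∨ i = r then 1 ≤ u ∧ u ≤ t ∧ u = v else PMmem r n t T i u v

/-- Sum of the first `i` entries (1-indexed prefix sums). -/
def pSum {r : ℕ} (v : GP r) (i : ℕ) : ℤ :=
  ∑ j ∈ Finset.univ.filter (fun j : Fin r => (j : ℕ) < i), v j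

/-- The filled oscillized local-rule grid: row index `k` counts down from the top row
(`k = 0` is `std(λ → ν)`), column index `q` goes right; the left column is
`std(κ → λ)` read so that `grid cA κ λ ν k 0 = std(κ→λ)` at position `cA - k`. -/
def grid {r : ℕ} (cA : ℕ) (κ lam ν : GP r) : ℕ → ℕ → GP r
  | 0, q => oscStep lam ν q
  | k + 1, 0 => oscStep κ lam (cA - (k + 1))
  | k + 1, q + 1 =>
      sortDesc (grid cA κ lam ν k (q + 1) + grid cA κ lam ν (k + 1) q -
        grid cA κ lam ν k q)
  termination_by k q => (k, q)

/-- 1-indexed entry of a vector (0 if out of range). -/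
def ent {r : ℕ} (v : GP r) (h : ℕ) : ℤ := if hh : h - 1 < r then v ⟨h - 1, hh⟩ else 0

/-- The chain `j_0 = 1, j_h = ` least `h`-balance point of the lattice word of `T`
weakly after `j_{h-1}` (in `{1,…,n}`), `none` once undefined. An index `j` is an
`h`-balance point iff `(T j)_h = (T j)_{h+1}` (1-indexed rows). -/
def jChain (r n : ℕ) (T : ℕ → GP r) : ℕ → Option ℕ
  | 0 => some 1
  | h + 1 =>
    match jChain r n T h with
    | none => none
    | some jp =>
      if H : ∃ j, jp ≤ j ∧ j ≤ n ∧ ent (T j) (h + 1) = ent (T j) (h + 2) then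
        some (Nat.find H)
      else none

/-- `k`: the largest `h ≤ r-1` such that `j_1, …, j_h` are all defined. -/
def kVal (r n : ℕ) (T : ℕ → GP r) : ℕ :=
  ((Finset.range r).filter fun h => (jChain r n T h).isSome).sup id

/-- `j_h`, defaulting to `0` when undefined. -/
def jval (r n : ℕ) (T : ℕ → GP r) (h : ℕ) : ℕ := (jChain r n T h).getD 0

/-- `ω_c` for `c ∈ {0,±1,…,±r}`: top-justified column of `c` ones if `c ≥ 0`,
bottom-justified column of `|c|` minus-ones if `c < 0`. -/
def omegaGP (r : ℕ) (c : ℤ) : GP r := fun i =>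
  if 0 ≤ c then (if (i : ℕ) < c.natAbs then 1 else 0)
  else (if r - c.natAbs ≤ (i : ℕ) then -1 else 0)

/-- The extremal fluctuating tableau of type `c`: partial sums of the `ω_{c_j}`. -/
def extremal (r : ℕ) (c : ℕ → ℤ) (k : ℕ) : GP r := ∑ j ∈ Finset.range k, omegaGP r (c j)

/-- Lexicographic order: the first nonzero entry of `β - α` is positive. -/
def ltLex {r : ℕ} (α β : GP r) : Prop := ∃ i : Fin r, (∀ j, j < i → α j = β j) ∧ α i < β i

/-- Cumulative sums of `|c_j|` (block boundaries). -/
def cumC (c : ℕ → ℤ) (j : ℕ) : ℕ := ∑ j' ∈ Finset.range j, (c j').natAbs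

/-- Entry `(u,v)` (for `u,v ∈ {1,…,n}`) of the reduced promotion matrix `PMr^i(T)`:
the number of cells in the block `B_u × B_v` whose promotion-matrix entry contains `i`. -/
def PMr (r n t : ℕ) (T : ℕ → GP r) (c : ℕ → ℤ) (i u v : ℕ) : ℕ :=
  (((Finset.Icc (cumC c (u - 1) + 1) (cumC c u)) ×ˢ
    (Finset.Icc (cumC c (v - 1) + 1) (cumC c v))).filter
      fun p => PMmem r n t T i p.1 p.2).card

/-- The set of `r`-row fluctuating tableaux of length `n`, shape `lam`, type `c`,
in bundled (finitely-indexed) form. -/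
def FTset (r n : ℕ) (lam : GP r) (c : Fin n → ℤ) : Set (Fin (n + 1) → GP r) :=
  {T | (∀ k, Antitone (T k)) ∧ T 0 = 0 ∧ T (Fin.last n) = lam ∧
       ∀ j : Fin n, colStep r (c j) (T j.castSucc) (T j.succ)}


/-! ### Pitman operators on integer paths -/

/-- Running maximum of `-f`. -/
def rm (f : ℕ → ℤ) : ℕ → ℤ
  | 0 => - f 0
  | v + 1 => max (rm f v) (- f (v + 1))

lemma le_rm (f : ℕ → ℤ) {s v : ℕ} (h : s ≤ v) : - f s ≤ rm f v := by
  induction v with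
  | zero => obtain rfl : s = 0 := by omega
            simp [rm]
  | succ v ih =>
    rcases Nat.lt_or_ge v s with h1 | h1
    · obtain rfl : s = v + 1 := by omega
      simp [rm]
    · have := ih h1
      simp only [rm]; omega

lemma rm_ex (f : ℕ → ℤ) (v : ℕ) : ∃ s ≤ v, rm f v = - f s := by
  induction v with
  | zero => exact ⟨0, le_rfl, rfl⟩
  | succ v ih =>
    obtain ⟨s, hs, h⟩ := ih
    simp only [rm]
    rcases le_total (rm f v) (- f (v + 1)) with h1 | h1
    · exact ⟨v + 1, le_rfl, max_eq_right h1⟩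
    · exact ⟨s, by omega, by rw [max_eq_left h1, h]⟩

lemma rm_mono (f : ℕ → ℤ) {s v : ℕ} (h : s ≤ v) : rm f s ≤ rm f v := by
  obtain ⟨q, hq, e⟩ := rm_ex f s
  rw [e]; exact le_rm f (by omega)

lemma rm_le (f : ℕ → ℤ) {v : ℕ} {c : ℤ} (h : ∀ s ≤ v, - f s ≤ c) : rm f v ≤ c := by
  obtain ⟨q, hq, e⟩ := rm_ex f v
  rw [e]; exact h q hq

/-- A path with down-steps of size at most one hits every level. -/
lemma hit (f : ℕ → ℤ) (hf : ∀ v, f v - 1 ≤ f (v + 1)) {p q : ℕ} {c : ℤ} (hpq : p ≤ q)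
    (h1 : - f p ≤ c) (h2 : c ≤ - f q) :
    ∃ s, p ≤ s ∧ s ≤ q ∧ - f s = c ∧ ∀ s', p ≤ s' → s' ≤ s → - f s' ≤ c := by
  obtain ⟨d, rfl⟩ := Nat.exists_eq_add_of_le hpq
  clear hpq
  induction d generalizing p with
  | zero =>
    refine ⟨p, le_rfl, by omega, by simp at h2; omega, ?_⟩
    intro s' a b
    obtain rfl : s' = p := by omega
    exact h1
  | succ d ih =>
    by_cases h3 : - f p = c
    · refine ⟨p, le_rfl, by omega, h3, ?_⟩
      intro s' a b
      obtain rfl : s' = p := by omega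
      exact h1
    · have := hf p
      obtain ⟨s, a, b, e, w⟩ := ih (p := p + 1) (by omega)
        (by rw [show p + 1 + d = p + (d + 1) by omega]; exact h2)
      refine ⟨s, by omega, by omega, e, ?_⟩
      intro s' x y
      rcases Nat.lt_or_ge p s' with h4 | h4
      · exact w s' (by omega) y
      · obtain rfl : s' = p := by omega
        exact h1

lemma braid_scalar (f g : ℕ → ℤ) (hf : ∀ v, f v - 1 ≤ f (v + 1)) (v : ℕ) :
    rm f v + rm (fun s => f s + 2 * rm f s - rm (fun s' => g s' - rm f s') s) v
      = rm (fun s => f s - rm g s) v := by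
  apply le_antisymm
  · obtain ⟨s, hs, e⟩ := rm_ex (fun s => f s + 2 * rm f s - rm (fun s' => g s' - rm f s') s) v
    rw [e]
    obtain ⟨p, hp, e2⟩ := rm_ex (fun s' => g s' - rm f s') s
    simp only [e2]
    obtain ⟨q, hq, e3⟩ := rm_ex f v
    rcases le_total p q with h | h
    · have h1 := le_rm (fun s => f s - rm g s) hq
      have h2 := le_rm g h
      have h3 := le_rm f (le_refl s)
      have h4 := rm_mono f hp
      try simp only at h1
      omega
    · have h1 := le_rm (fun s => f s - rm g s) hs
      have h2 := le_rm g hp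
      have h3 := le_rm f h
      have h4 := rm_mono f hp
      have h5 := rm_mono f hs
      try simp only at h1
      omega
  · obtain ⟨s, hs, e⟩ := rm_ex (fun s => f s - rm g s) v
    rw [e]
    obtain ⟨p, hp, e2⟩ := rm_ex g s
    simp only [e2]
    have key : ∀ s', p ≤ s' → rm f p - g p ≤ rm (fun s' => g s' - rm f s') s' := by
      intro s' h
      have := le_rm (fun s' => g s' - rm f s') h
      try simp only at this
      omega
    by_cases h : rm f v = rm f p
    · have h1 := le_rm (fun s => f s + 2 * rm f s - rm (fun s' => g s' - rm f s') s) hs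
      have h2 := key s hp
      have h4 := rm_mono f hp
      have h5 := rm_mono f hs
      try simp only at h1
      omega
    · obtain ⟨q, hq, e3⟩ := rm_ex f v
      have h0 := rm_mono f (hp.trans hs)
      have hpq : p ≤ q := by
        by_contra hc
        have := le_rm f (show q ≤ p by omega)
        omega
      obtain ⟨z, a, b, c, d⟩ := hit f hf hpq (le_rm f (le_refl p)) (by omega)
      have h6 : rm f z = rm f p := by
        apply le_antisymm _ (rm_mono f a)
        apply rm_le
        intro s' hs'
        rcases le_total p s' with h7 | h7
        · exact d s' h7 hs'
        · exact le_rm f h7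
      have h1 := le_rm (fun s => f s + 2 * rm f s - rm (fun s' => g s' - rm f s') s)
        (show z ≤ v by omega)
      have h2 := key z a
      have h3 := le_rm f hs
      try simp only at h1
      omega

/-- scalar shift lemma -/
lemma shift_scalar (f : ℕ → ℤ) (hf : ∀ v, f v - 1 ≤ f (v + 1)) (h0 : f 0 = 0) (v : ℕ) :
    rm f (v + 1) - rm f 1 + rm (fun s => f (s + 1) - f 1 + 2 * (rm f (s + 1) - rm f 1)) v
      = rm (fun s => f (s + 1) - f 1) v := by
  have hM0 : 0 ≤ rm f 1 := by have := le_rm f (Nat.zero_le 1); omega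
  have hM1 := le_rm f (le_refl 1)
  set N := rm (fun s => f (s + 1) - f 1) with hN
  have hN0 : ∀ s, 0 ≤ N s := by
    intro s
    have := le_rm (fun s => f (s + 1) - f 1) (Nat.zero_le s)
    simp at this; rw [hN]; omega
  have hNs : ∀ s, f 1 - f (s + 1) ≤ N s := by
    intro s
    have := le_rm (fun s => f (s + 1) - f 1) (le_refl s)
    rw [hN]; omega
  have hM : ∀ s, rm f (s + 1) - rm f 1 = max 0 (N s - f 1 - rm f 1) := by
    intro s
    apply le_antisymm
    · obtain ⟨q, hq, e⟩ := rm_ex f (s + 1)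
      rcases Nat.lt_or_ge q 2 with h | h
      · have := le_rm f (show q ≤ 1 by omega)
        omega
      · obtain ⟨q, rfl⟩ : ∃ q', q = q' + 1 := ⟨q - 1, by omega⟩
        have := le_rm (fun s => f (s + 1) - f 1) (show q ≤ s by omega)
        rw [← hN] at this; omega
    · have h1 := rm_mono f (show 1 ≤ s + 1 by omega)
      obtain ⟨q, hq, e⟩ := rm_ex (fun s => f (s + 1) - f 1) s
      have := le_rm f (show q + 1 ≤ s + 1 by omega)
      simp only [← hN] at e
      omega
  simp only [hM]
  have hc : rm (fun s => f (s + 1) - f 1 + 2 * max 0 (N s - f 1 - rm f 1)) v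
      = min (N v) (f 1 + rm f 1) := by
    apply le_antisymm
    · apply rm_le
      intro s hs
      have h1 := hNs s
      have h2 := rm_mono (fun s => f (s + 1) - f 1) hs
      simp only [← hN] at h2
      omega
    · obtain ⟨q, hq, e⟩ := rm_ex (fun s => f (s + 1) - f 1) v
      simp only [← hN] at e
      obtain ⟨z, a, b, c, d⟩ := hit (fun s => f (s + 1) - f 1)
        (fun v => by have := hf (v + 1); omega) (Nat.zero_le q)
        (c := min (N v) (f 1 + rm f 1)) (by have := hN0 v; simp; omega)
        (by omega)
      have h1 := le_rm (fun s => f (s + 1) - f 1 + 2 * max 0 (N s - f 1 - rm f 1))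
        (show z ≤ v by omega)
      have h2 : N z ≤ min (N v) (f 1 + rm f 1) := by
        apply rm_le; intro s hs; exact d s (by omega) hs
      try simp only at h1 c
      omega
  rw [hc]
  omega

/-- scalar reversal lemma -/
lemma rev_scalar (f : ℕ → ℤ) (hf : ∀ v, f v - 1 ≤ f (v + 1)) (L v : ℕ) :
    rm (fun s => f (L - s) - f L + 2 * (rm f (L - s) - rm f L)) v - (rm f L - rm f (L - v))
      = rm (fun s => f (L - s) - f L) v := by
  apply le_antisymm
  · obtain ⟨s, hs, e⟩ := rm_ex (fun s => f (L - s) - f L + 2 * (rm f (L - s) - rm f L)) v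
    rw [e]
    have h1 := le_rm f (le_refl (L - s))
    have h2 := rm_mono f (show L - v ≤ L - s by omega)
    obtain ⟨q, hq, e2⟩ := rm_ex f L
    rcases le_total (L - v) q with h | h
    · have h3 := le_rm (fun s => f (L - s) - f L) (show L - q ≤ v by omega)
      simp only [show L - (L - q) = q by omega] at h3
      omega
    · have h3 := le_rm (fun s => f (L - s) - f L) hs
      have h4 := rm_mono f (show q ≤ L - v by omega)
      have h5 := le_rm f (le_refl q)
      have h6 := le_rm f h
      have h7 := rm_mono f (show L - s ≤ L by omega)
      try simp only at h3
      omega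
  · obtain ⟨s, hs, e⟩ := rm_ex (fun s => f (L - s) - f L) v
    rw [e]
    by_cases h : rm f L = rm f (L - v)
    · have h2 := rm_mono f (show L - v ≤ L - s by omega)
      have h3 := rm_mono f (show L - s ≤ L by omega)
      have h1 := le_rm (fun s => f (L - s) - f L + 2 * (rm f (L - s) - rm f L)) hs
      try simp only at h1
      omega
    · obtain ⟨q, hq, e2⟩ := rm_ex f L
      have h0 := rm_mono f (show L - v ≤ L by omega)
      have hpq : L - v ≤ q := by
        by_contra hc
        have := le_rm f (show q ≤ L - v by omega)
        omega
      obtain ⟨z, a, b, c, d⟩ := hit f hf hpq (le_rm f (le_refl (L - v))) (by omega)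
      have h6 : rm f z = rm f (L - v) := by
        apply le_antisymm _ (rm_mono f a)
        apply rm_le
        intro s' hs'
        rcases le_total (L - v) s' with h7 | h7
        · exact d s' h7 hs'
        · exact le_rm f h7
      have h1 := le_rm (fun s => f (L - s) - f L + 2 * (rm f (L - s) - rm f L))
        (show L - z ≤ v by omega)
      have h3 := le_rm f (show L - s ≤ L by omega)
      simp only [show L - (L - z) = z by omega] at h1
      try simp only
      omega

/-- Coefficients of the simple root `α_i`. -/
def co (i j : ℕ) : ℤ := if j = i then 1 else if j = i + 1 then -1 else 0

/-- Pitman operator. -/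
def Pt (i : ℕ) (π : ℕ → ℕ → ℤ) : ℕ → ℕ → ℤ :=
  fun v j => π v j + rm (fun s => π s i - π s (i + 1)) v * co i j

/-- Paths starting at the origin whose `v`-th step is `δ v • e_q`. -/
structure Gd (r : ℕ) (δ : ℕ → ℤ) (π : ℕ → ℕ → ℤ) : Prop where
  zero : ∀ j, π 0 j = 0
  sg : ∀ v, -1 ≤ δ v ∧ δ v ≤ 1
  step : ∀ v, ∃ q < r, ∀ j, π (v + 1) j = π v j + if j = q then δ v else 0

lemma Gd.skip {r : ℕ} {δ : ℕ → ℤ} {π : ℕ → ℕ → ℤ} (h : Gd r δ π) (i : ℕ) (v : ℕ) :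
    (fun s => π s i - π s (i + 1)) v - 1 ≤ (fun s => π s i - π s (i + 1)) (v + 1) := by
  obtain ⟨q, hq, e⟩ := h.step v
  have := h.sg v
  simp only [e]
  split_ifs <;> omega

lemma Gd.pt {r : ℕ} {δ : ℕ → ℤ} {π : ℕ → ℕ → ℤ} (h : Gd r δ π) {i : ℕ} (hi : i + 1 < r) :
    Gd r δ (Pt i π) := by
  refine ⟨fun j => by simp [Pt, rm, h.zero], h.sg, fun v => ?_⟩
  obtain ⟨q, hq, e⟩ := h.step v
  have hs := h.skip i v
  have hsg := h.sg v
  have h1 := le_rm (fun s => π s i - π s (i + 1)) (le_refl v)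
  simp only [Pt, rm]
  simp only at hs h1
  set M := rm (fun s => π s i - π s (i + 1)) v with hM
  by_cases hc : -(π (v + 1) i - π (v + 1) (i + 1)) ≤ M
  · refine ⟨q, hq, fun j => ?_⟩
    rw [max_eq_left hc, e]; ring
  · rw [max_eq_right (by omega)]
    have h2 : -(π (v + 1) i - π (v + 1) (i + 1)) = M + 1 := by omega
    have e1 := e i
    have e2 := e (i + 1)
    rw [h2]
    by_cases hqi : q = i
    · subst hqi
      simp at e1 e2
      have hd : δ v = -1 := by omega
      refine ⟨q + 1, hi, fun j => ?_⟩
      rw [e, hd]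
      unfold co
      split_ifs <;> omega
    · have h3 : q = i + 1 := by
        by_contra h3
        rw [if_neg (by omega)] at e1 e2
        omega
      subst h3
      simp at e1 e2
      have hd : δ v = 1 := by omega
      refine ⟨i, by omega, fun j => ?_⟩
      rw [e, hd]
      unfold co
      split_ifs <;> omega

lemma co_self (i : ℕ) : co i i = 1 := by simp [co]
lemma co_succ (i : ℕ) : co i (i + 1) = -1 := by simp [co]
lemma co_succ' (i : ℕ) : co (i + 1) i = 0 := by unfold co; split_ifs <;> omega
lemma co_succ2 (i : ℕ) : co i (i + 1 + 1) = 0 := by unfold co; split_ifs <;> omega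
lemma co_far {i j : ℕ} (h : j < i ∨ i + 1 < j) : co i j = 0 := by
  unfold co; split_ifs <;> omega

lemma rm_nonneg {f : ℕ → ℤ} (h : f 0 = 0) (v : ℕ) : 0 ≤ rm f v := by
  have := le_rm f (Nat.zero_le v); omega

lemma pt_fix {π : ℕ → ℕ → ℤ} (h0 : ∀ j, π 0 j = 0) {i : ℕ}
    (h : ∀ v, π v (i + 1) ≤ π v i) : Pt i π = π := by
  funext v j
  have : rm (fun s => π s i - π s (i + 1)) v = 0 := by
    apply le_antisymm
    · apply rm_le; intro s _; have := h s; omega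
    · apply rm_nonneg; simp [h0]
  simp [Pt, this]

lemma pt_idem {π : ℕ → ℕ → ℤ} (h0 : ∀ j, π 0 j = 0) (i : ℕ) : Pt i (Pt i π) = Pt i π := by
  apply pt_fix
  · intro j; simp [Pt, rm, h0]
  · intro v
    have h1 := le_rm (fun s => π s i - π s (i + 1)) (le_refl v)
    have h2 := rm_nonneg (f := (fun s => π s i - π s (i + 1))) (by simp [h0]) v
    simp only [Pt, co_self, co_succ]
    try simp only at h1
    omega

lemma pt_comm (π : ℕ → ℕ → ℤ) {i j : ℕ} (h : i + 1 < j) :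
    Pt i (Pt j π) = Pt j (Pt i π) := by
  have a1 : co j i = 0 := co_far (by omega)
  have a2 : co j (i + 1) = 0 := co_far (by omega)
  have a3 : co i j = 0 := co_far (by omega)
  have a4 : co i (j + 1) = 0 := co_far (by omega)
  funext v k
  simp only [Pt, a1, a2, a3, a4, mul_zero, add_zero]
  ring

lemma pt_braid {r : ℕ} {δ : ℕ → ℤ} {π : ℕ → ℕ → ℤ} (h : Gd r δ π) (i : ℕ) :
    Pt i (Pt (i + 1) (Pt i π)) = Pt (i + 1) (Pt i (Pt (i + 1) π)) := by
  funext v k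
  have b1 := braid_scalar (fun s => π s i - π s (i + 1)) (fun s => π s (i + 1) - π s (i + 1 + 1))
    (h.skip i) v
  have b2 := braid_scalar (fun s => π s (i + 1) - π s (i + 1 + 1)) (fun s => π s i - π s (i + 1))
    (h.skip (i + 1)) v
  simp only [Pt, co_self, co_succ, co_succ', co_succ2]
  set f := (fun s => π s i - π s (i + 1)) with hf
  set g := (fun s => π s (i + 1) - π s (i + 1 + 1)) with hg
  have e1 : (fun s => π s (i + 1) + rm f s * -1 - (π s (i + 1 + 1) + rm f s * 0))
      = fun s => g s - rm f s := by funext s; simp only [hg]; ring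
  have e2 : (fun s => π s i + rm g s * 0 - (π s (i + 1) + rm g s * 1))
      = fun s => f s - rm g s := by funext s; simp only [hf]; ring
  rw [e1, e2]
  have e3 : (fun s => π s i + rm f s * 1 + rm (fun s => g s - rm f s) s * 0 -
      (π s (i + 1) + rm f s * -1 + rm (fun s => g s - rm f s) s * 1))
      = fun s => f s + 2 * rm f s - rm (fun s => g s - rm f s) s := by
    funext s; simp only [hf]; ring
  have e4 : (fun s => π s (i + 1) + rm g s * 1 + rm (fun s => f s - rm g s) s * -1 -
      (π s (i + 1 + 1) + rm g s * -1 + rm (fun s => f s - rm g s) s * 0))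
      = fun s => g s + 2 * rm g s - rm (fun s => f s - rm g s) s := by
    funext s; simp only [hg]; ring
  rw [e3, e4, ← b1, ← b2]
  ring

/-- Apply Pitman operators along a list (last entry first). -/
def app (l : List ℕ) (π : ℕ → ℕ → ℤ) : ℕ → ℕ → ℤ := l.foldr Pt π

def cl : ℕ → List ℕ
  | 0 => []
  | k + 1 => k :: cl k

def wl : ℕ → List ℕ
  | 0 => []
  | k + 1 => wl k ++ cl (k + 1)

/-- The longest-element operator. -/
def WW (k : ℕ) (π : ℕ → ℕ → ℤ) : ℕ → ℕ → ℤ := app (wl k) π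

lemma app_append (l m : List ℕ) (π : ℕ → ℕ → ℤ) : app (l ++ m) π = app l (app m π) := by
  simp [app, List.foldr_append]

lemma app_cons (i : ℕ) (l : List ℕ) (π : ℕ → ℕ → ℤ) : app (i :: l) π = Pt i (app l π) := rfl

lemma mem_cl {k i : ℕ} (h : i ∈ cl k) : i < k := by
  induction k with
  | zero => simp [cl] at h
  | succ k ih =>
    simp only [cl, List.mem_cons] at h
    rcases h with h | h
    · omega
    · have := ih h; omega

lemma mem_wl {k i : ℕ} (h : i ∈ wl k) : i < k := by
  induction k with
  | zero => simp [wl] at h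
  | succ k ih =>
    simp only [wl, List.mem_append] at h
    rcases h with h | h
    · have := ih h; omega
    · exact mem_cl h

lemma Gd.app {r : ℕ} {δ : ℕ → ℤ} {π : ℕ → ℕ → ℤ} (h : Gd r δ π) {l : List ℕ}
    (hl : ∀ i ∈ l, i + 1 < r) : Gd r δ (FT.app l π) := by
  induction l with
  | nil => exact h
  | cons i l ih =>
    rw [app_cons]
    exact (ih fun j hj => hl j (List.mem_cons_of_mem _ hj)).pt (hl i List.mem_cons_self)

lemma Gd.ww {r : ℕ} {δ : ℕ → ℤ} {π : ℕ → ℕ → ℤ} (h : Gd r δ π) {k : ℕ}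
    (hk : k < r) : Gd r δ (WW k π) :=
  h.app fun i hi => by have := mem_wl hi; omega

lemma app_comm (π : ℕ → ℕ → ℤ) {l : List ℕ} {j : ℕ} (hl : ∀ i ∈ l, i + 1 < j) :
    app l (Pt j π) = Pt j (app l π) := by
  induction l with
  | nil => rfl
  | cons i l ih =>
    rw [app_cons, app_cons, ih fun j hj => hl j (List.mem_cons_of_mem _ hj),
      pt_comm _ (hl i List.mem_cons_self)]

lemma cl_slide {r : ℕ} {δ : ℕ → ℤ} {π : ℕ → ℕ → ℤ} (h : Gd r δ π) (i d : ℕ) (hr : i + 2 + d < r) :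
    app (cl (i + 2 + d)) (Pt (i + 1) π) = Pt i (app (cl (i + 2 + d)) π) := by
  induction d with
  | zero =>
    show Pt (i + 1) (Pt i (app (cl i) (Pt (i + 1) π))) = Pt i (Pt (i + 1) (Pt i (app (cl i) π)))
    rw [app_comm _ (fun j hj => by have := mem_cl hj; omega)]
    exact (pt_braid (h.app fun j hj => by have := mem_cl hj; omega) i).symm
  | succ d ih =>
    show Pt (i + 2 + d) (app (cl (i + 2 + d)) (Pt (i + 1) π)) =
      Pt i (Pt (i + 2 + d) (app (cl (i + 2 + d)) π))
    rw [ih (by omega), pt_comm _ (show i + 1 < i + 2 + d by omega)]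

lemma cl_zero {π : ℕ → ℕ → ℤ} (h0 : ∀ j, π 0 j = 0) (k : ℕ) :
    app (cl (k + 1)) (Pt 0 π) = app (cl (k + 1)) π := by
  induction k with
  | zero => exact pt_idem h0 0
  | succ k ih =>
    show Pt (k + 1) (app (cl (k + 1)) (Pt 0 π)) = Pt (k + 1) (app (cl (k + 1)) π)
    rw [ih]

lemma ww_absorb {r : ℕ} {δ : ℕ → ℤ} {k : ℕ} (hk : k < r) : ∀ {π : ℕ → ℕ → ℤ} (_ : Gd r δ π)
    {i : ℕ} (_ : i < k), WW k (Pt i π) = WW k π := by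
  induction k with
  | zero => intro π h i hi; omega
  | succ k ih =>
    intro π h i hi
    simp only [WW, wl, app_append]
    rcases Nat.eq_zero_or_pos i with rfl | hpos
    · rw [cl_zero h.zero]
    · obtain ⟨i, rfl⟩ : ∃ i', i = i' + 1 := ⟨i - 1, by omega⟩
      obtain ⟨d, rfl⟩ : ∃ d, k = i + 1 + d := ⟨k - (i + 1), by omega⟩
      have := cl_slide h i d (by omega)
      rw [show i + 1 + d + 1 = i + 2 + d by omega, this]
      exact ih (by omega) (h.app fun j hj => by have := mem_cl hj; omega) (by omega)

lemma ww_absorb_app {r : ℕ} {δ : ℕ → ℤ} {k : ℕ} (hk : k < r) {π : ℕ → ℕ → ℤ} (h : Gd r δ π)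
    {l : List ℕ} (hl : ∀ i ∈ l, i < k) : WW k (app l π) = WW k π := by
  induction l with
  | nil => rfl
  | cons i l ih =>
    have h2 : ∀ j ∈ l, j < k := fun j hj => hl j (List.mem_cons_of_mem _ hj)
    rw [app_cons, ww_absorb hk (h.app fun j hj => by have := h2 j hj; omega)
      (hl i List.mem_cons_self), ih h2]

lemma ww_fix {k : ℕ} {π : ℕ → ℕ → ℤ} (h0 : ∀ j, π 0 j = 0)
    (h : ∀ v j, j < k → π v (j + 1) ≤ π v j) : WW k π = π := by
  have : ∀ l : List ℕ, (∀ i ∈ l, i < k) → app l π = π := by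
    intro l hl
    induction l with
    | nil => rfl
    | cons i l ih =>
      rw [app_cons, ih fun j hj => hl j (List.mem_cons_of_mem _ hj)]
      exact pt_fix h0 fun v => h v i (hl i List.mem_cons_self)
  exact this _ fun i hi => mem_wl hi

/-! Shift -/

def Sh (π : ℕ → ℕ → ℤ) : ℕ → ℕ → ℤ := fun v j => π (v + 1) j - π 1 j

lemma Gd.sh {r : ℕ} {δ : ℕ → ℤ} {π : ℕ → ℕ → ℤ} (h : Gd r δ π) :
    Gd r (fun v => δ (v + 1)) (Sh π) := by
  refine ⟨fun j => by simp [Sh], fun v => h.sg _, fun v => ?_⟩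
  obtain ⟨q, hq, e⟩ := h.step (v + 1)
  exact ⟨q, hq, fun j => by simp only [Sh, e]; ring⟩

lemma pt_sh {r : ℕ} {δ : ℕ → ℤ} {π : ℕ → ℕ → ℤ} (h : Gd r δ π) (i : ℕ) :
    Pt i (Sh (Pt i π)) = Pt i (Sh π) := by
  funext v j
  have := shift_scalar (fun s => π s i - π s (i + 1)) (h.skip i) (by simp [h.zero]) v
  simp only [Pt, Sh, co_self, co_succ]
  set f := (fun s => π s i - π s (i + 1)) with hf
  have e1 : (fun s => π (s + 1) i + rm f (s + 1) * 1 - (π 1 i + rm f 1 * 1) -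
      (π (s + 1) (i + 1) + rm f (s + 1) * -1 - (π 1 (i + 1) + rm f 1 * -1)))
      = fun s => f (s + 1) - f 1 + 2 * (rm f (s + 1) - rm f 1) := by
    funext s; simp only [hf]; ring
  have e2 : (fun s => π (s + 1) i - π 1 i - (π (s + 1) (i + 1) - π 1 (i + 1)))
      = fun s => f (s + 1) - f 1 := by funext s; simp only [hf]; ring
  rw [e1, e2, ← this]
  ring

lemma ww_sh {r : ℕ} {δ : ℕ → ℤ} {k : ℕ} (hk : k < r) {π : ℕ → ℕ → ℤ} (h : Gd r δ π) :
    WW k (Sh (WW k π)) = WW k (Sh π) := by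
  have : ∀ l : List ℕ, (∀ i ∈ l, i < k) → WW k (Sh (app l π)) = WW k (Sh π) := by
    intro l hl
    induction l with
    | nil => rfl
    | cons i l ih =>
      have h2 : ∀ j ∈ l, j < k := fun j hj => hl j (List.mem_cons_of_mem _ hj)
      have hi := hl i List.mem_cons_self
      have g := h.app (l := l) fun j hj => by have := h2 j hj; omega
      rw [app_cons, ← ww_absorb hk (g.pt (i := i) (by omega)).sh hi, pt_sh g,
        ww_absorb hk g.sh hi, ih h2]
  exact this _ fun i hi => mem_wl hi

/-! Reversal -/

def Rv (r L : ℕ) (π : ℕ → ℕ → ℤ) : ℕ → ℕ → ℤ :=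
  fun v j => if j < r then π L (r - 1 - j) - π (L - v) (r - 1 - j) else 0

lemma Gd.rv {r : ℕ} {δ : ℕ → ℤ} {π : ℕ → ℕ → ℤ} (h : Gd r δ π) (L : ℕ) :
    Gd r (fun v => if v < L then δ (L - 1 - v) else 0) (Rv r L π) := by
  refine ⟨fun j => by simp [Rv], fun v => ?_, fun v => ?_⟩
  · have := h.sg (L - 1 - v)
    split_ifs <;> omega
  · by_cases hv : v < L
    · obtain ⟨q, hq, e⟩ := h.step (L - 1 - v)
      refine ⟨r - 1 - q, by omega, fun j => ?_⟩
      simp only [Rv, hv, if_true]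
      rw [show L - v = L - 1 - v + 1 by omega, show L - (v + 1) = L - 1 - v by omega, e]
      split_ifs <;> omega
    · obtain ⟨q, hq, e⟩ := h.step 0
      refine ⟨q, hq, fun j => ?_⟩
      simp only [Rv, hv, if_false]
      rw [show L - v = 0 by omega, show L - (v + 1) = 0 by omega]
      split_ifs <;> omega

lemma pt_rv {r : ℕ} {δ : ℕ → ℤ} {π : ℕ → ℕ → ℤ} (h : Gd r δ π) (L : ℕ) {i : ℕ} (hi : i + 1 < r) :
    Pt (r - 2 - i) (Rv r L (Pt i π)) = Pt (r - 2 - i) (Rv r L π) := by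
  funext v j
  have := rev_scalar (fun s => π s i - π s (i + 1)) (h.skip i) L v
  obtain ⟨d, rfl⟩ : ∃ d, r = i + 2 + d := ⟨r - i - 2, by omega⟩
  have s1 : i + 2 + d - 2 - i = d := by omega
  have s2 : i + 2 + d - 1 - d = i + 1 := by omega
  have s3 : i + 2 + d - 1 - (d + 1) = i := by omega
  simp only [Pt, Rv, s1, s2, s3, show d < i + 2 + d by omega, show d + 1 < i + 2 + d by omega,
    if_true, co_self, co_succ]
  set f := (fun s => π s i - π s (i + 1)) with hf
  have e1 : (fun s => π L (i + 1) + rm f L * -1 - (π (L - s) (i + 1) + rm f (L - s) * -1) -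
      (π L i + rm f L * 1 - (π (L - s) i + rm f (L - s) * 1)))
      = fun s => f (L - s) - f L + 2 * (rm f (L - s) - rm f L) := by
    funext s; simp only [hf]; ring
  have e2 : (fun s => π L (i + 1) - π (L - s) (i + 1) - (π L i - π (L - s) i))
      = fun s => f (L - s) - f L := by funext s; simp only [hf]; ring
  rw [e1, e2, ← this]
  by_cases hj : j < i + 2 + d
  · have : co i (i + 2 + d - 1 - j) = - co d j := by
      unfold co; split_ifs <;> omega
    simp only [hj, if_true, this]
    ring
  · have : co d j = 0 := co_far (by omega)
    simp [hj, this]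

lemma ww_rv {r : ℕ} {δ : ℕ → ℤ} {π : ℕ → ℕ → ℤ} (h : Gd r δ π) (L : ℕ) (hr : 0 < r) :
    WW (r - 1) (Rv r L (WW (r - 1) π)) = WW (r - 1) (Rv r L π) := by
  have : ∀ l : List ℕ, (∀ i ∈ l, i < r - 1) →
      WW (r - 1) (Rv r L (app l π)) = WW (r - 1) (Rv r L π) := by
    intro l hl
    induction l with
    | nil => rfl
    | cons i l ih =>
      have h2 : ∀ j ∈ l, j < r - 1 := fun j hj => hl j (List.mem_cons_of_mem _ hj)
      have hi := hl i List.mem_cons_self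
      have g := h.app (l := l) fun j hj => by have := h2 j hj; omega
      rw [app_cons, ← ww_absorb (by omega) ((g.pt (i := i) (by omega)).rv L)
        (show r - 2 - i < r - 1 by omega), pt_rv g L (by omega),
        ww_absorb (by omega) (g.rv L) (by omega), ih h2]
  exact this _ fun i hi => mem_wl hi

/-! Dominance inequality -/

lemma sum_co (i k : ℕ) : 0 ≤ ∑ j ∈ Finset.range k, co i j := by
  have : ∑ j ∈ Finset.range k, co i j = if k = i + 1 then 1 else 0 := by
    induction k with
    | zero => simp
    | succ k ih =>
      rw [Finset.sum_range_succ, ih]; unfold co; split_ifs <;> omega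
  rw [this]; split_ifs <;> omega

lemma psum_pt {π : ℕ → ℕ → ℤ} (h0 : ∀ j, π 0 j = 0) (i v k : ℕ) :
    ∑ j ∈ Finset.range k, π v j ≤ ∑ j ∈ Finset.range k, Pt i π v j := by
  simp only [Pt, Finset.sum_add_distrib, ← Finset.mul_sum]
  have h1 := sum_co i k
  have h2 := rm_nonneg (f := (fun s => π s i - π s (i + 1))) (by simp [h0]) v
  have := mul_nonneg h2 h1
  omega

lemma psum_app {r : ℕ} {δ : ℕ → ℤ} {π : ℕ → ℕ → ℤ} (h : Gd r δ π) (v k : ℕ) (l : List ℕ)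
    (hl : ∀ i ∈ l, i + 1 < r) :
    ∑ j ∈ Finset.range k, π v j ≤ ∑ j ∈ Finset.range k, app l π v j := by
  induction l with
  | nil => exact le_rfl
  | cons i l ih =>
    have h2 : ∀ j ∈ l, j + 1 < r := fun j hj => hl j (List.mem_cons_of_mem _ hj)
    exact (ih h2).trans (psum_pt (h.app h2).zero i v k)

lemma dom_ineq {r : ℕ} {δ : ℕ → ℤ} (hr : 0 < r) (v : ℕ) : ∀ (m : ℕ) (I : Finset ℕ)
    (π : ℕ → ℕ → ℤ), Gd r δ π → ∑ j ∈ I, j = m → (∀ j ∈ I, j < r) →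
    ∑ j ∈ I, π v j ≤ ∑ j ∈ Finset.range I.card, WW (r - 1) π v j := by
  intro m
  induction m using Nat.strong_induction_on with
  | _ m ih =>
    intro I π h hm hI
    by_cases hc : ∃ i, i ∉ I ∧ i + 1 ∈ I
    · obtain ⟨i, h1, h2⟩ := hc
      have hir := hI _ h2
      have h1' : i ∉ I.erase (i + 1) := fun hh => h1 (Finset.mem_of_mem_erase hh)
      have hs : ∀ g : ℕ → ℤ, ∑ j ∈ insert i (I.erase (i + 1)), g j =
          ∑ j ∈ I, g j + g i - g (i + 1) := by
        intro g
        rw [Finset.sum_insert h1', ← Finset.add_sum_erase I g h2]; ring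
      have hs' : ∑ j ∈ insert i (I.erase (i + 1)), j + 1 = ∑ j ∈ I, j := by
        rw [Finset.sum_insert h1', ← Finset.add_sum_erase I (fun j => j) h2]; ring
      have hcard : (insert i (I.erase (i + 1))).card = I.card := by
        rw [Finset.card_insert_of_notMem h1', Finset.card_erase_add_one h2]
      have key := ih _ (by omega) (insert i (I.erase (i + 1))) (Pt i π) (h.pt hir) rfl (by
        intro j hj
        rw [Finset.mem_insert] at hj
        rcases hj with rfl | hj
        · omega
        · exact hI j (Finset.mem_of_mem_erase hj))
      rw [hcard, ww_absorb (by omega) h (by omega)] at key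
      refine le_trans ?_ key
      simp only [Pt, Finset.sum_add_distrib, ← Finset.mul_sum]
      have hco : ∑ j ∈ insert i (I.erase (i + 1)), co i j = 1 := by
        rw [Finset.sum_insert h1', co_self, Finset.sum_eq_zero]
        · rfl
        · intro j hj
          have a : j ≠ i := fun hh => h1' (hh ▸ hj)
          have b := Finset.ne_of_mem_erase hj
          exact co_far (by omega)
      rw [hco, hs]
      have := le_rm (fun s => π s i - π s (i + 1)) (le_refl v)
      try simp only at this
      omega
    · push Not at hc
      have hd : ∀ d x, x + d ∈ I → x ∈ I := by
        intro d
        induction d with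
        | zero => intro x hx; exact hx
        | succ d ihd =>
          intro x hx
          by_contra hx'
          exact hx' (ihd x (by
            by_contra h5
            exact hc _ h5 hx))
      have hIr : I = Finset.range I.card := by
        apply Finset.eq_of_subset_of_card_le
        · intro x hx
          have : Finset.range (x + 1) ⊆ I := by
            intro y hy
            rw [Finset.mem_range] at hy
            exact hd (x - y) y (by rwa [show y + (x - y) = x by omega])
          have := Finset.card_le_card this
          rw [Finset.card_range] at this
          rw [Finset.mem_range]; omega
        · simp
      have := psum_app h v I.card (wl (r - 1)) (fun i hi => by have := mem_wl hi; omega)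
      rw [← hIr] at this
      rw [← hIr]
      exact this

lemma dom_rev {r : ℕ} {δ : ℕ → ℤ} (v k : ℕ) (hk : k ≤ r) (hr : 0 < r) {π : ℕ → ℕ → ℤ}
    (h : Gd r δ π) :
    ∑ j ∈ Finset.range k, π v (r - 1 - j) ≤ ∑ j ∈ Finset.range k, WW (r - 1) π v j := by
  have inj : Set.InjOn (fun j => r - 1 - j) (Finset.range k : Set ℕ) := by
    intro a ha b hb hab
    simp at ha hb hab
    omega
  have := dom_ineq hr v _ ((Finset.range k).image fun j => r - 1 - j) π h rfl (by
    intro j hj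
    simp at hj
    omega)
  rw [Finset.sum_image inj, Finset.card_image_of_injOn inj, Finset.card_range] at this
  exact this

theorem ww_lowest {r : ℕ} {δ : ℕ → ℤ} (hr : 0 < r) {π : ℕ → ℕ → ℤ}
    (h : Gd r δ π) (L : ℕ) (hd : ∀ v j, j + 1 < r → Rv r L π v (j + 1) ≤ Rv r L π v j)
    {j : ℕ} (hj : j < r) : WW (r - 1) π L j = π L (r - 1 - j) := by
  have hψ : Gd r δ (WW (r - 1) π) := h.ww (by omega)
  have e : WW (r - 1) (Rv r L (WW (r - 1) π)) = Rv r L π := by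
    rw [ww_rv h L hr]
    exact ww_fix (h.rv L).zero fun v j hj => hd v j (by omega)
  have key : ∀ k ≤ r, ∑ j ∈ Finset.range k, WW (r - 1) π L j
      = ∑ j ∈ Finset.range k, π L (r - 1 - j) := by
    intro k hk
    apply le_antisymm
    · have := dom_rev L k hk hr (hψ.rv L)
      rw [e] at this
      have e1 : ∑ j ∈ Finset.range k, Rv r L (WW (r - 1) π) L (r - 1 - j)
          = ∑ j ∈ Finset.range k, WW (r - 1) π L j := by
        apply Finset.sum_congr rfl
        intro j hj
        rw [Finset.mem_range] at hj
        simp only [Rv, show r - 1 - j < r by omega, if_true, Nat.sub_self, hψ.zero, sub_zero]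
        congr 1
        omega
      have e2 : ∑ j ∈ Finset.range k, Rv r L π L j
          = ∑ j ∈ Finset.range k, π L (r - 1 - j) := by
        apply Finset.sum_congr rfl
        intro j hj
        rw [Finset.mem_range] at hj
        simp only [Rv, show j < r by omega, if_true, Nat.sub_self, h.zero, sub_zero]
      rw [e1, e2] at this
      exact this
    · exact dom_rev L k hk hr h
  have a := key j (by omega)
  have b := key (j + 1) (by omega)
  rw [Finset.sum_range_succ, Finset.sum_range_succ] at b
  omega

/-! Sliding -/

lemma slide_pos {r : ℕ} {δ : ℕ → ℤ} {ρ : ℕ → ℕ → ℤ} (hr : 0 < r) (h : Gd r δ ρ)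
    (hdom : ∀ k j, j + 1 < r → ρ k (j + 1) ≤ ρ k j) (a : ℕ → ℕ) (ha0 : a 0 = 0)
    (har : ∀ k, a k < r) (h1 : ∀ j, ρ 1 j = if j = 0 then 1 else 0)
    (hm : ∀ k, a k ≤ a (k + 1))
    (hfl : ∀ k j, a k ≤ j → j < a (k + 1) → ρ (k + 2) j = ρ (k + 2) (j + 1))
    (hQ : ∀ k j, j + 1 < r → ρ (k + 1) (j + 1) - (if j + 1 = a k then 1 else 0) ≤
      ρ (k + 1) j - (if j = a k then 1 else 0)) :
    WW (r - 1) (Sh ρ) = fun k j => ρ (k + 1) j - (if j = a k then 1 else 0) := by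
  have stage : ∀ m < r, ∃ l : List ℕ, (∀ i ∈ l, i < r - 1) ∧ app l (Sh ρ) =
      fun k j => ρ (k + 1) j - (if j = min (a k) m then 1 else 0) := by
    intro m
    induction m with
    | zero =>
      intro _
      refine ⟨[], by simp, ?_⟩
      funext k j
      simp [app, Sh, h1]
    | succ m ih =>
      intro hmr
      obtain ⟨l, hl, e⟩ := ih (by omega)
      refine ⟨m :: l, ?_, ?_⟩
      · intro i hi
        rw [List.mem_cons] at hi
        rcases hi with rfl | hi
        · omega
        · exact hl i hi
      · rw [app_cons, e]
        have key : ∀ k, rm (fun s => ρ (s + 1) m - (if m = min (a s) m then 1 else 0) -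
            (ρ (s + 1) (m + 1) - (if m + 1 = min (a s) m then 1 else 0))) k
            = if m < a k then 1 else 0 := by
          intro k
          induction k with
          | zero =>
            simp only [rm, ha0, zero_add, h1]
            rw [if_neg (show ¬ m < 0 by omega), if_neg (show ¬ m + 1 = 0 by omega),
              if_neg (show ¬ m + 1 = min 0 m by omega)]
            rcases Nat.eq_zero_or_pos m with rfl | hm0
            · simp
            · rw [if_neg (show ¬ m = 0 by omega), if_neg (show ¬ m = min 0 m by omega)]
              simp
          | succ k ihk =>
            simp only [rm, ihk]
            have q1 := hm k
            have q2 := hfl k m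
            have q3 := hQ (k + 1) m hmr
            have q4 := hdom (k + 2) m hmr
            rw [show k + 1 + 1 = k + 2 by omega] at *
            rw [if_neg (show ¬ m + 1 = min (a (k + 1)) m by omega)]
            by_cases c1 : m < a k
            · rw [if_pos c1, if_pos (show m < a (k + 1) by omega),
                if_pos (show m = min (a (k + 1)) m by omega)]
              omega
            · by_cases c2 : m < a (k + 1)
              · rw [if_neg c1, if_pos c2, if_pos (show m = min (a (k + 1)) m by omega)]
                have := q2 (by omega) c2
                omega
              · rw [if_neg c1, if_neg c2]
                rw [if_neg (show ¬ m + 1 = a (k + 1) by omega)] at q3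
                by_cases c3 : m = a (k + 1)
                · rw [if_pos c3] at q3
                  rw [if_pos (show m = min (a (k + 1)) m by omega)]
                  omega
                · rw [if_neg (show ¬ m = min (a (k + 1)) m by omega)]
                  omega
        funext k j
        simp only [Pt, key]
        unfold co
        split_ifs <;> omega
  obtain ⟨l, hl, e⟩ := stage (r - 1) (by omega)
  have e2 : app l (Sh ρ) = fun k j => ρ (k + 1) j - (if j = a k then 1 else 0) := by
    rw [e]; funext k j
    have := har k
    rw [min_eq_left (by omega)]
  rw [← ww_absorb_app (by omega) h.sh hl, e2]
  apply ww_fix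
  · intro j; simp [h1, ha0]
  · intro v j hj
    exact hQ v j (by omega)

lemma slide_neg {r : ℕ} {δ : ℕ → ℤ} {ρ : ℕ → ℕ → ℤ} (hr : 0 < r) (h : Gd r δ ρ)
    (hdom : ∀ k j, j + 1 < r → ρ k (j + 1) ≤ ρ k j) (a : ℕ → ℕ) (ha0 : a 0 = r - 1)
    (har : ∀ k, a k < r) (h1 : ∀ j, ρ 1 j = if j = r - 1 then -1 else 0)
    (hm : ∀ k, a (k + 1) ≤ a k)
    (hfl : ∀ k j, a (k + 1) ≤ j → j < a k → ρ (k + 2) j = ρ (k + 2) (j + 1))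
    (hQ : ∀ k j, j + 1 < r → ρ (k + 1) (j + 1) + (if j + 1 = a k then 1 else 0) ≤
      ρ (k + 1) j + (if j = a k then 1 else 0)) :
    WW (r - 1) (Sh ρ) = fun k j => ρ (k + 1) j + (if j = a k then 1 else 0) := by
  have stage : ∀ d m, m + d + 1 = r → ∃ l : List ℕ, (∀ i ∈ l, i < r - 1) ∧ app l (Sh ρ) =
      fun k j => ρ (k + 1) j + (if j = max (a k) m then 1 else 0) := by
    intro d
    induction d with
    | zero =>
      intro m hmr
      refine ⟨[], by simp, ?_⟩
      funext k j
      have := har k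
      rw [max_eq_right (by omega)]
      simp only [app, Sh, h1, List.foldr_nil]
      split_ifs <;> omega
    | succ d ih =>
      intro m hmr
      obtain ⟨l, hl, e⟩ := ih (m + 1) (by omega)
      refine ⟨m :: l, ?_, ?_⟩
      · intro i hi
        rw [List.mem_cons] at hi
        rcases hi with rfl | hi
        · omega
        · exact hl i hi
      · rw [app_cons, e]
        have key : ∀ k, rm (fun s => ρ (s + 1) m + (if m = max (a s) (m + 1) then 1 else 0) -
            (ρ (s + 1) (m + 1) + (if m + 1 = max (a s) (m + 1) then 1 else 0))) k
            = if a k ≤ m then 1 else 0 := by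
          intro k
          induction k with
          | zero =>
            simp only [rm, ha0, zero_add, h1]
            split_ifs <;> omega
          | succ k ihk =>
            simp only [rm, ihk]
            have q1 := hm k
            have q2 := hfl k m
            have q3 := hQ (k + 1) m (by omega)
            have q4 := hdom (k + 2) m (by omega)
            rw [show k + 1 + 1 = k + 2 by omega] at *
            by_cases c1 : a k ≤ m
            · rw [if_pos c1, if_pos (show a (k + 1) ≤ m by omega), if_neg (by omega),
                if_pos (by omega)]
              omega
            · by_cases c2 : a (k + 1) ≤ m
              · rw [if_neg c1, if_pos c2, if_neg (by omega), if_pos (by omega)]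
                have := q2 (by omega) (by omega)
                omega
              · rw [if_neg c1, if_neg c2]
                split_ifs at q3 ⊢ <;> omega
        funext k j
        simp only [Pt, key]
        unfold co
        split_ifs <;> omega
  obtain ⟨l, hl, e⟩ := stage (r - 1) 0 (by omega)
  have e2 : app l (Sh ρ) = fun k j => ρ (k + 1) j + (if j = a k then 1 else 0) := by
    rw [e]; funext k j
    rw [max_eq_left (by omega)]
  rw [← ww_absorb_app (by omega) h.sh hl, e2]
  apply ww_fix
  · intro j; simp only [h1, ha0, zero_add]; split_ifs <;> omega
  · intro v j hj
    exact hQ v j (by omega)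

/-! Sorting -/

lemma sortDesc_antitone {r : ℕ} (α : GP r) : Antitone (sortDesc α) := by
  intro i j hij
  exact Tuple.monotone_sort α (Fin.rev_le_rev.mpr hij)

lemma sortDesc_eq {r : ℕ} {α β : GP r} (σ : Equiv.Perm (Fin r)) (h : β = α ∘ σ)
    (hβ : Antitone β) : sortDesc α = β := by
  have h1 : Monotone (α ∘ (Fin.revPerm.trans σ : Equiv.Perm (Fin r))) := by
    intro i j hij
    have := hβ (Fin.rev_le_rev.mpr hij)
    rw [h] at this
    simpa using this
  have h2 := Tuple.unique_monotone (Tuple.monotone_sort α) h1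
  funext i
  have h3 := congrFun h2 i.rev
  unfold sortDesc
  rw [h3, h]
  simp

lemma sort_sub {r : ℕ} (ν : GP r) (a : Fin r) : ∃ b, Antitone ν →
    a ≤ b ∧ (∀ j, a ≤ j → j ≤ b → ν j = ν a) ∧ sortDesc (ν - eV a) = ν - eV b := by
  have hne : (Finset.univ.filter fun j => ν j = ν a).Nonempty := ⟨a, by simp⟩
  set b := (Finset.univ.filter fun j => ν j = ν a).max' hne with hb
  have h1 : ν b = ν a := by
    have := Finset.max'_mem _ hne
    simpa using this
  have h2 : ∀ j, ν j = ν a → j ≤ b := fun j hj => Finset.le_max' _ _ (by simpa using hj)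
  refine ⟨b, fun hν => ⟨h2 a rfl, fun j h3 h4 => ?_, ?_⟩⟩
  · have := hν h3; have := hν h4; omega
  · apply sortDesc_eq (Equiv.swap a b)
    · funext j
      simp only [Pi.sub_apply, Function.comp, eV]
      by_cases ja : j = a
      · subst ja
        rw [Equiv.swap_apply_left, h1]
        by_cases hjb : j = b
        · rw [← hjb]
        · rw [if_neg hjb, if_neg (Ne.symm hjb)]
      · by_cases jb : j = b
        · rw [jb, Equiv.swap_apply_right, h1]; simp
        · rw [Equiv.swap_apply_of_ne_of_ne ja jb]; simp [ja, jb]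
    · intro i j hij
      simp only [Pi.sub_apply, eV]
      have h5 := hν hij
      by_cases hi : i = b
      · by_cases hj : j = b
        · rw [if_pos hi, if_pos hj]; omega
        · have : ν j ≠ ν a := fun hh => hj (le_antisymm (h2 j hh) (hi ▸ hij))
          rw [hi] at h5 ⊢
          simp [hj]; omega
      · rw [if_neg hi]; split_ifs <;> omega

lemma sort_add {r : ℕ} (ν : GP r) (a : Fin r) : ∃ b, Antitone ν →
    b ≤ a ∧ (∀ j, b ≤ j → j ≤ a → ν j = ν a) ∧ sortDesc (ν + eV a) = ν + eV b := by
  have hne : (Finset.univ.filter fun j => ν j = ν a).Nonempty := ⟨a, by simp⟩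
  set b := (Finset.univ.filter fun j => ν j = ν a).min' hne with hb
  have h1 : ν b = ν a := by
    have := Finset.min'_mem _ hne
    simpa using this
  have h2 : ∀ j, ν j = ν a → b ≤ j := fun j hj => Finset.min'_le _ _ (by simpa using hj)
  refine ⟨b, fun hν => ⟨h2 a rfl, fun j h3 h4 => ?_, ?_⟩⟩
  · have := hν h3; have := hν h4; omega
  · apply sortDesc_eq (Equiv.swap a b)
    · funext j
      simp only [Pi.add_apply, Function.comp, eV]
      by_cases ja : j = a
      · subst ja
        rw [Equiv.swap_apply_left, h1]
        by_cases hjb : j = b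
        · rw [← hjb]
        · rw [if_neg hjb, if_neg (Ne.symm hjb)]
      · by_cases jb : j = b
        · rw [jb, Equiv.swap_apply_right, h1]; simp
        · rw [Equiv.swap_apply_of_ne_of_ne ja jb]; simp [ja, jb]
    · intro i j hij
      simp only [Pi.add_apply, eV]
      have h5 := hν hij
      by_cases hj : j = b
      · by_cases hi : i = b
        · rw [if_pos hi, if_pos hj]; omega
        · have : ν i ≠ ν a := fun hh => hi (le_antisymm (hj ▸ hij) (h2 i hh))
          rw [hj] at h5 ⊢
          simp [hi]; omega
      · rw [if_neg hj]; split_ifs <;> omega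

/-! Promotion recursion -/

lemma BKseg_rec {r : ℕ} (S : ℕ → GP r) (m : ℕ) :
    (∀ k, k = 0 ∨ m < k → BKseg 1 m S k = S k) ∧
    ∀ k < m, BKseg 1 m S (k + 1) = sortDesc (S (k + 2) + BKseg 1 m S k - S (k + 1)) := by
  induction m with
  | zero => exact ⟨fun k _ => rfl, fun k hk => by omega⟩
  | succ m ih =>
    obtain ⟨h1, h2⟩ := ih
    have hb : ∀ k, k ≠ m + 1 → BKseg 1 (m + 1) S k = BKseg 1 m S k := by
      intro k hk
      simp only [BKseg, Function.comp, BK]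
      rw [if_neg (by omega)]
    constructor
    · intro k hk
      rw [hb k (by omega)]
      exact h1 k (by omega)
    · intro k hk
      rcases Nat.lt_or_ge k m with h | h
      · rw [hb _ (by omega), hb _ (by omega), h2 k h]
      · obtain rfl : k = m := by omega
        rw [hb k (by omega)]
        simp only [BKseg, Function.comp, BK]
        rw [if_pos (by omega), show 1 + k - 1 = k by omega, show 1 + k + 1 = k + 2 by omega,
          show 1 + k = k + 1 by omega, h1 (k + 2) (by omega), h1 (k + 1) (by omega)]

lemma promo_zero {r : ℕ} (t : ℕ) (S : ℕ → GP r) : promo t S 0 = S 0 :=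
  (BKseg_rec S (t - 1)).1 0 (Or.inl rfl)

lemma promo_succ {r : ℕ} (t : ℕ) (S : ℕ → GP r) {k : ℕ} (hk : k + 1 < t) :
    promo t S (k + 1) = sortDesc (S (k + 2) + promo t S k - S (k + 1)) :=
  (BKseg_rec S (t - 1)).2 k (by omega)

lemma PE_succ {r : ℕ} (t : ℕ) (S : ℕ → GP r) (u : ℕ) : PE t S (u + 1) = promo t (PE t S u) := by
  unfold PE; rw [Function.iterate_succ_apply']

/-- Tracking the moving box along a row, positive case. -/
lemma track_pos {r : ℕ} (R Q : ℕ → GP r) (K : ℕ) (hR : ∀ k ≤ K + 1, Antitone (R k)) (a0 : Fin r)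
    (h0 : R 1 = Q 0 + eV a0)
    (hQ : ∀ k < K, Q (k + 1) = sortDesc (R (k + 2) + Q k - R (k + 1))) :
    ∃ a : ℕ → Fin r, a 0 = a0 ∧ (∀ k ≤ K, R (k + 1) = Q k + eV (a k)) ∧
      (∀ k, a k ≤ a (k + 1)) ∧ (∀ k ≥ K, a k = a K) ∧
      ∀ k < K, ∀ j, a k ≤ j → j ≤ a (k + 1) → R (k + 2) j = R (k + 2) (a k) := by
  choose B hB using fun (ν : GP r) (x : Fin r) => sort_sub ν x
  let a : ℕ → Fin r := fun k => Nat.rec a0 (fun k x => if k < K then B (R (k + 2)) x else x) k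
  have hs : ∀ k, a (k + 1) = if k < K then B (R (k + 2)) (a k) else a k := fun k => rfl
  refine ⟨a, rfl, ?_, ?_, ?_, ?_⟩
  · intro k
    induction k with
    | zero => intro _; exact h0
    | succ k ih =>
      intro hk
      have e := ih (by omega)
      rw [hQ k (by omega), e, hs, if_pos (by omega)]
      have := (hB (R (k + 2)) (a k) (hR _ (by omega))).2.2
      rw [show R (k + 2) + Q k - (Q k + eV (a k)) = R (k + 2) - eV (a k) by abel, this]
      abel
  · intro k
    rw [hs]
    split_ifs with hk
    · exact (hB (R (k + 2)) (a k) (hR _ (by omega))).1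
    · exact le_rfl
  · intro k hk
    induction k, hk using Nat.le_induction with
    | base => rfl
    | succ k hk ih => rw [hs, if_neg (by omega), ih]
  · intro k hk j h1 h2
    rw [hs, if_pos hk] at h2
    exact (hB (R (k + 2)) (a k) (hR _ (by omega))).2.1 j h1 h2

/-- Tracking the moving box along a row, negative case. -/
lemma track_neg {r : ℕ} (R Q : ℕ → GP r) (K : ℕ) (hR : ∀ k ≤ K + 1, Antitone (R k)) (a0 : Fin r)
    (h0 : R 1 = Q 0 - eV a0)
    (hQ : ∀ k < K, Q (k + 1) = sortDesc (R (k + 2) + Q k - R (k + 1))) :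
    ∃ a : ℕ → Fin r, a 0 = a0 ∧ (∀ k ≤ K, R (k + 1) = Q k - eV (a k)) ∧
      (∀ k, a (k + 1) ≤ a k) ∧ (∀ k ≥ K, a k = a K) ∧
      ∀ k < K, ∀ j, a (k + 1) ≤ j → j ≤ a k → R (k + 2) j = R (k + 2) (a k) := by
  choose B hB using fun (ν : GP r) (x : Fin r) => sort_add ν x
  let a : ℕ → Fin r := fun k => Nat.rec a0 (fun k x => if k < K then B (R (k + 2)) x else x) k
  have hs : ∀ k, a (k + 1) = if k < K then B (R (k + 2)) (a k) else a k := fun k => rfl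
  refine ⟨a, rfl, ?_, ?_, ?_, ?_⟩
  · intro k
    induction k with
    | zero => intro _; exact h0
    | succ k ih =>
      intro hk
      have e := ih (by omega)
      rw [hQ k (by omega), e, hs, if_pos (by omega)]
      have := (hB (R (k + 2)) (a k) (hR _ (by omega))).2.2
      rw [show R (k + 2) + Q k - (Q k - eV (a k)) = R (k + 2) + eV (a k) by abel, this]
      abel
  · intro k
    rw [hs]
    split_ifs with hk
    · exact (hB (R (k + 2)) (a k) (hR _ (by omega))).1
    · exact le_rfl
  · intro k hk
    induction k, hk using Nat.le_induction with
    | base => rfl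
    | succ k hk ih => rw [hs, if_neg (by omega), ih]
  · intro k hk j h1 h2
    rw [hs, if_pos hk] at h1
    exact (hB (R (k + 2)) (a k) (hR _ (by omega))).2.1 j h1 h2

/-! Rows of the growth diagram -/

/-- Extension of a vector by zero. -/
def ext {r : ℕ} (v : GP r) (j : ℕ) : ℤ := if h : j < r then v ⟨j, h⟩ else 0

lemma ext_fin {r : ℕ} (v : GP r) (j : Fin r) : ext v j = v j := by simp [ext]

lemma ext_of_lt {r : ℕ} (v : GP r) {j : ℕ} (h : j < r) : ext v j = v ⟨j, h⟩ := by simp [ext, h]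

lemma ext_add {r : ℕ} (v w : GP r) (j : ℕ) : ext (v + w) j = ext v j + ext w j := by
  unfold ext; split_ifs <;> simp

lemma ext_sub {r : ℕ} (v w : GP r) (j : ℕ) : ext (v - w) j = ext v j - ext w j := by
  unfold ext; split_ifs <;> simp

lemma ext_eV {r : ℕ} (a : Fin r) (j : ℕ) : ext (eV a) j = if j = (a : ℕ) then 1 else 0 := by
  unfold ext eV
  by_cases h : j < r
  · simp [h, Fin.ext_iff]
  · have := a.2
    rw [dif_neg h, if_neg (by omega)]

lemma ext_zero {r : ℕ} (j : ℕ) : ext (0 : GP r) j = 0 := by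
  unfold ext; split_ifs <;> simp

lemma ext_inj {r : ℕ} {v w : GP r} (h : ∀ j, ext v j = ext w j) : v = w := by
  funext j; rw [← ext_fin v, ← ext_fin w, h]

lemma ext_dom {r : ℕ} {v : GP r} (h : Antitone v) {j : ℕ} (hj : j + 1 < r) :
    ext v (j + 1) ≤ ext v j := by
  rw [ext_of_lt v hj, ext_of_lt v (by omega : j < r)]
  exact h (by rw [Fin.le_def]; simp)

lemma anti_of_ext {r : ℕ} {v : GP r} (h : ∀ j, j + 1 < r → ext v (j + 1) ≤ ext v j) :
    Antitone v := by
  have key : ∀ d j, j + d < r → ext v (j + d) ≤ ext v j := by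
    intro d
    induction d with
    | zero => intro j _; exact le_rfl
    | succ d ih =>
      intro j hj
      exact (h (j + d) (by omega)).trans (ih j (by omega))
  intro i j hij
  rw [← ext_fin v i, ← ext_fin v j]
  rw [Fin.le_def] at hij
  have := key ((j : ℕ) - i) i (by have := j.2; omega)
  rwa [show (i : ℕ) + (j - i) = j by omega] at this

lemma dom_first_pos {r : ℕ} {ρ : ℕ → ℕ → ℤ} {q : ℕ} (hq : q < r)
    (hdom : ∀ j, j + 1 < r → ρ 1 (j + 1) ≤ ρ 1 j)
    (e : ∀ j, ρ 1 j = if j = q then 1 else 0) : q = 0 := by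
  by_contra hne
  have := hdom (q - 1) (by omega)
  rw [e, e, if_pos (by omega), if_neg (by omega)] at this
  omega

lemma dom_first_neg {r : ℕ} {ρ : ℕ → ℕ → ℤ} {q : ℕ} (hq : q < r)
    (hdom : ∀ j, j + 1 < r → ρ 1 (j + 1) ≤ ρ 1 j)
    (e : ∀ j, ρ 1 j = if j = q then -1 else 0) : q = r - 1 := by
  by_contra hne
  have := hdom q (by omega)
  rw [e, e, if_pos rfl, if_neg (by omega)] at this
  omega

lemma Gd.const {r : ℕ} {δ : ℕ → ℤ} {ρ : ℕ → ℕ → ℤ} (h : Gd r δ ρ) {K : ℕ}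
    (hc : ∀ k ≥ K, δ k = 0) : ∀ k ≥ K, ρ k = ρ K := by
  intro k hk
  induction k, hk using Nat.le_induction with
  | base => rfl
  | succ k hk ih =>
    obtain ⟨q, _, e⟩ := h.step k
    funext j
    rw [e, hc k hk, ih]; simp

/-- The conclusion of the row step. -/
def RowOut (r K : ℕ) (δ : ℕ → ℤ) (ρ : ℕ → ℕ → ℤ) (Q : ℕ → GP r) : Prop :=
  (∃ a : ℕ → ℕ, (∀ k, a k < r) ∧
    (δ 0 = 1 → a 0 = 0 ∧ ∀ k, a k ≤ a (k + 1)) ∧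
    (δ 0 = -1 → a 0 = r - 1 ∧ ∀ k, a (k + 1) ≤ a k) ∧
    (∀ k j, ρ (k + 1) j = WW (r - 1) (Sh ρ) k j + if j = a k then δ 0 else 0)) ∧
  (∀ k ≤ K, ∀ j, ext (Q k) j = WW (r - 1) (Sh ρ) k j) ∧
  (∀ k j, j + 1 < r → WW (r - 1) (Sh ρ) k (j + 1) ≤ WW (r - 1) (Sh ρ) k j)

lemma row_pos {r K : ℕ} {δ : ℕ → ℤ} {ρ : ℕ → ℕ → ℤ} (hr : 0 < r) (h : Gd r δ ρ)
    (hdom : ∀ k j, j + 1 < r → ρ k (j + 1) ≤ ρ k j) (hd0 : δ 0 = 1)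
    (hc : ∀ k ≥ K + 1, δ k = 0) (R Q : ℕ → GP r)
    (hR : ∀ k ≤ K + 1, ∀ j, ext (R k) j = ρ k j) (hQ0 : Q 0 = R 0)
    (hQ : ∀ k < K, Q (k + 1) = sortDesc (R (k + 2) + Q k - R (k + 1))) :
    RowOut r K δ ρ Q := by
  obtain ⟨q, hq, e⟩ := h.step 0
  have e1 : ∀ j, ρ 1 j = if j = q then 1 else 0 := by
    intro j; have := e j; rw [zero_add, h.zero, hd0, zero_add] at this; exact this
  have q0 := dom_first_pos hq (hdom 1) e1
  have hQ0' : Q 0 = 0 := by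
    apply ext_inj; intro j; rw [hQ0, hR 0 (by omega), h.zero, ext_zero]
  have hRa : ∀ k ≤ K + 1, Antitone (R k) := by
    intro k hk
    apply anti_of_ext
    intro j hj
    rw [hR k hk, hR k hk]; exact hdom k j hj
  have hQa : ∀ k ≤ K, Antitone (Q k) := by
    intro k hk
    cases k with
    | zero => rw [hQ0']; intro i j _; exact le_rfl
    | succ k => rw [hQ k (by omega)]; exact sortDesc_antitone _
  have h0 : R 1 = Q 0 + eV ⟨q, hq⟩ := by
    apply ext_inj; intro j
    rw [ext_add, hQ0', ext_zero, ext_eV, hR 1 (by omega), e1, zero_add]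
  obtain ⟨a, a0, a1, a2, a3, a4⟩ := track_pos R Q K hRa ⟨q, hq⟩ h0 hQ
  have hQe : ∀ k ≤ K, ∀ j, ext (Q k) j = ρ (k + 1) j - if j = (a k : ℕ) then 1 else 0 := by
    intro k hk j
    rw [← hR (k + 1) (by omega), a1 k hk, ext_add, ext_eV]; ring
  have hcon := h.const hc
  have hWd : ∀ k j, j + 1 < r → ρ (k + 1) (j + 1) - (if j + 1 = (a k : ℕ) then 1 else 0) ≤
      ρ (k + 1) j - (if j = (a k : ℕ) then 1 else 0) := by
    intro k j hj
    rcases Nat.lt_or_ge K k with hk | hk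
    · rw [a3 k (by omega), hcon (k + 1) (by omega), ← hQe K le_rfl, ← hQe K le_rfl]
      exact ext_dom (hQa K le_rfl) hj
    · rw [← hQe k hk, ← hQe k hk]
      exact ext_dom (hQa k hk) hj
  have hW := slide_pos hr h hdom (fun k => (a k : ℕ)) (by simp [a0, q0]) (fun k => (a k).2)
    (by intro j; rw [e1, q0]) (fun k => a2 k) (by
      intro k j h1 h2
      rcases Nat.lt_or_ge k K with hk | hk
      · have hjr : j + 1 < r := by have := (a (k + 1)).2; omega
        have z1 := a4 k hk ⟨j, by omega⟩ h1 (by rw [Fin.le_def]; exact h2.le)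
        have z2 := a4 k hk ⟨j + 1, hjr⟩ (by rw [Fin.le_def]; simp only; omega)
          (by rw [Fin.le_def]; exact h2)
        rw [← hR (k + 2) (by omega), ← hR (k + 2) (by omega), ext_of_lt _ (by omega : j < r),
          ext_of_lt _ hjr, z1, z2]
      · simp only [a3 k hk, a3 (k + 1) (by omega)] at h1 h2
        omega) hWd
  refine ⟨⟨fun k => a k, fun k => (a k).2, fun _ => ⟨by simp [a0, q0], a2⟩,
    fun hh => by omega, ?_⟩, ?_, ?_⟩
  · intro k j
    rw [hW, hd0]; ring
  · intro k hk j
    rw [hW, hQe k hk]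
  · intro k j hj
    rw [hW]; exact hWd k j hj

lemma row_neg {r K : ℕ} {δ : ℕ → ℤ} {ρ : ℕ → ℕ → ℤ} (hr : 0 < r) (h : Gd r δ ρ)
    (hdom : ∀ k j, j + 1 < r → ρ k (j + 1) ≤ ρ k j) (hd0 : δ 0 = -1)
    (hc : ∀ k ≥ K + 1, δ k = 0) (R Q : ℕ → GP r)
    (hR : ∀ k ≤ K + 1, ∀ j, ext (R k) j = ρ k j) (hQ0 : Q 0 = R 0)
    (hQ : ∀ k < K, Q (k + 1) = sortDesc (R (k + 2) + Q k - R (k + 1))) :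
    RowOut r K δ ρ Q := by
  obtain ⟨q, hq, e⟩ := h.step 0
  have e1 : ∀ j, ρ 1 j = if j = q then -1 else 0 := by
    intro j; have := e j; rw [zero_add, h.zero, hd0, zero_add] at this; exact this
  have q0 := dom_first_neg hq (hdom 1) e1
  have hQ0' : Q 0 = 0 := by
    apply ext_inj; intro j; rw [hQ0, hR 0 (by omega), h.zero, ext_zero]
  have hRa : ∀ k ≤ K + 1, Antitone (R k) := by
    intro k hk
    apply anti_of_ext
    intro j hj
    rw [hR k hk, hR k hk]; exact hdom k j hj
  have hQa : ∀ k ≤ K, Antitone (Q k) := by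
    intro k hk
    cases k with
    | zero => rw [hQ0']; intro i j _; exact le_rfl
    | succ k => rw [hQ k (by omega)]; exact sortDesc_antitone _
  have h0 : R 1 = Q 0 - eV ⟨q, hq⟩ := by
    apply ext_inj; intro j
    rw [ext_sub, hQ0', ext_zero, ext_eV, hR 1 (by omega), e1]
    simp only
    split_ifs <;> simp
  obtain ⟨a, a0, a1, a2, a3, a4⟩ := track_neg R Q K hRa ⟨q, hq⟩ h0 hQ
  have hQe : ∀ k ≤ K, ∀ j, ext (Q k) j = ρ (k + 1) j + if j = (a k : ℕ) then 1 else 0 := by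
    intro k hk j
    rw [← hR (k + 1) (by omega), a1 k hk, ext_sub, ext_eV]; ring
  have hcon := h.const hc
  have hWd : ∀ k j, j + 1 < r → ρ (k + 1) (j + 1) + (if j + 1 = (a k : ℕ) then 1 else 0) ≤
      ρ (k + 1) j + (if j = (a k : ℕ) then 1 else 0) := by
    intro k j hj
    rcases Nat.lt_or_ge K k with hk | hk
    · rw [a3 k (by omega), hcon (k + 1) (by omega), ← hQe K le_rfl, ← hQe K le_rfl]
      exact ext_dom (hQa K le_rfl) hj
    · rw [← hQe k hk, ← hQe k hk]
      exact ext_dom (hQa k hk) hj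
  have hW := slide_neg hr h hdom (fun k => (a k : ℕ)) (by simp [a0, q0]) (fun k => (a k).2)
    (by intro j; rw [e1, q0]) (fun k => a2 k) (by
      intro k j h1 h2
      rcases Nat.lt_or_ge k K with hk | hk
      · have hjr : j + 1 < r := by have := (a k).2; omega
        have z1 := a4 k hk ⟨j, by omega⟩ h1 (by rw [Fin.le_def]; exact h2.le)
        have z2 := a4 k hk ⟨j + 1, hjr⟩ (by rw [Fin.le_def]; simp only; omega)
          (by rw [Fin.le_def]; exact h2)
        rw [← hR (k + 2) (by omega), ← hR (k + 2) (by omega), ext_of_lt _ (by omega : j < r),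
          ext_of_lt _ hjr, z1, z2]
      · simp only [a3 k hk, a3 (k + 1) (by omega)] at h1 h2
        omega) hWd
  refine ⟨⟨fun k => a k, fun k => (a k).2, fun hh => by omega,
    fun _ => ⟨by simp [a0, q0], a2⟩, ?_⟩, ?_, ?_⟩
  · intro k j
    rw [hW, hd0]; simp only; split_ifs <;> ring
  · intro k hk j
    rw [hW, hQe k hk]
  · intro k j hj
    rw [hW]; exact hWd k j hj

/-- Abstract rectangular oscillating tableau of length `t` with signs `δ`. -/
structure Osc (r t : ℕ) (δ : ℕ → ℤ) (S : ℕ → GP r) : Prop where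
  zero : S 0 = 0
  anti : ∀ k, Antitone (S k)
  sg : ∀ k < t, δ k = 1 ∨ δ k = -1
  sg0 : ∀ k ≥ t, δ k = 0
  step : ∀ k < t, ∃ q : Fin r, ∀ j, S (k + 1) j = S k j + if j = q then δ k else 0
  con : ∀ k ≥ t, S k = S t
  rect : ∃ m, ∀ i, S t i = m

/-- The path of `S` shifted by `u`. -/
def pth {r : ℕ} (S : ℕ → GP r) (u : ℕ) : ℕ → ℕ → ℤ := fun v j => ext (S (u + v)) j - ext (S u) j

/-- The `u`-th row of the growth diagram as a path. -/
def row {r : ℕ} (S : ℕ → GP r) (u : ℕ) : ℕ → ℕ → ℤ := WW (r - 1) (pth S u)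

lemma sh_pth {r : ℕ} (S : ℕ → GP r) (u : ℕ) : Sh (pth S u) = pth S (u + 1) := by
  funext v j
  simp only [Sh, pth]
  rw [show u + (v + 1) = u + 1 + v by omega]; ring

lemma Osc.gd {r t : ℕ} {δ : ℕ → ℤ} {S : ℕ → GP r} (h : Osc r t δ S) (hr : 0 < r) (u : ℕ) :
    Gd r (fun v => δ (u + v)) (pth S u) := by
  refine ⟨fun j => by simp [pth], fun v => ?_, fun v => ?_⟩
  · rcases Nat.lt_or_ge (u + v) t with hv | hv
    · have := h.sg _ hv; omega
    · have := h.sg0 _ hv; omega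
  · rcases Nat.lt_or_ge (u + v) t with hv | hv
    · obtain ⟨q, e⟩ := h.step _ hv
      refine ⟨q, q.2, fun j => ?_⟩
      simp only [pth]
      rw [← add_assoc]
      by_cases hj : j < r
      · rw [ext_of_lt _ hj, ext_of_lt _ hj, ext_of_lt _ hj, e]
        simp only [Fin.ext_iff]; ring
      · have := q.2
        rw [if_neg (by omega)]
        simp [ext, hj]
    · refine ⟨0, hr, fun j => ?_⟩
      simp only [pth]
      rw [← add_assoc, h.con (u + v + 1) (by omega), h.con (u + v) (by omega), h.sg0 _ hv]
      simp

lemma Osc.gdr {r t : ℕ} {δ : ℕ → ℤ} {S : ℕ → GP r} (h : Osc r t δ S) (hr : 0 < r) (u : ℕ) :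
    Gd r (fun v => δ (u + v)) (row S u) := (h.gd hr u).ww (by omega)

lemma Osc.row_zero {r t : ℕ} {δ : ℕ → ℤ} {S : ℕ → GP r} (h : Osc r t δ S) (k j : ℕ) :
    row S 0 k j = ext (S k) j := by
  have e : pth S 0 = fun k j => ext (S k) j := by
    funext k j; simp [pth, h.zero, ext_zero]
  unfold row
  rw [e, ww_fix]
  · intro j; rw [h.zero, ext_zero]
  · intro v j hj; exact ext_dom (h.anti v) (by omega)

lemma sh_row {r t : ℕ} {δ : ℕ → ℤ} {S : ℕ → GP r} (h : Osc r t δ S) (hr : 0 < r) (u : ℕ) :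
    WW (r - 1) (Sh (row S u)) = row S (u + 1) := by
  unfold row
  rw [ww_sh (by omega) (h.gd hr u), sh_pth]

/-- Induction along the rows. -/
lemma rows {r t : ℕ} {δ : ℕ → ℤ} {S : ℕ → GP r} (h : Osc r t δ S) (hr : 0 < r) (u : ℕ) (hu : u ≤ t) :
    (∀ k j, j + 1 < r → row S u k (j + 1) ≤ row S u k j) ∧
    (∀ k ≤ t - u, ∀ j, ext (PE t S u k) j = row S u k j) ∧
    (∀ w, w + 1 = u → ∃ a : ℕ → ℕ, (∀ k, a k < r) ∧
      (δ w = 1 → a 0 = 0 ∧ ∀ k, a k ≤ a (k + 1)) ∧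
      (δ w = -1 → a 0 = r - 1 ∧ ∀ k, a (k + 1) ≤ a k) ∧
      (∀ k j, row S w (k + 1) j = row S u k j + if j = a k then δ w else 0)) := by
  induction u with
  | zero =>
    refine ⟨fun k j hj => ?_, fun k _ j => ?_, fun w hw => by omega⟩
    · rw [h.row_zero, h.row_zero]; exact ext_dom (h.anti k) hj
    · rw [h.row_zero]; rfl
  | succ u ih =>
    obtain ⟨i1, i2, -⟩ := ih (by omega)
    have hg := h.gdr hr u
    have hout : RowOut r (t - u - 1) (fun v => δ (u + v)) (row S u) (PE t S (u + 1)) := by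
      rw [PE_succ]
      have hc : ∀ k ≥ t - u - 1 + 1, (fun v => δ (u + v)) k = 0 :=
        fun k hk => h.sg0 _ (by omega)
      have hR : ∀ k ≤ t - u - 1 + 1, ∀ j, ext (PE t S u k) j = row S u k j :=
        fun k hk => i2 k (by omega)
      have hQ : ∀ k < t - u - 1, promo t (PE t S u) (k + 1) =
          sortDesc (PE t S u (k + 2) + promo t (PE t S u) k - PE t S u (k + 1)) :=
        fun k hk => promo_succ t _ (by omega)
      rcases h.sg u (by omega) with hd | hd
      · exact row_pos hr hg i1 hd hc _ _ hR (promo_zero t _) hQ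
      · exact row_neg hr hg i1 hd hc _ _ hR (promo_zero t _) hQ
    unfold RowOut at hout
    rw [sh_row h hr] at hout
    obtain ⟨o1, o2, o3⟩ := hout
    refine ⟨o3, fun k hk => o2 k (by omega), fun w hw => ?_⟩
    obtain rfl : w = u := by omega
    exact o1
/-! Cells, row and column data -/

lemma single_eq {x y : ℕ} {d e : ℤ} (he : e ≠ 0)
    (h : ∀ j : ℕ, (if j = x then d else 0) = if j = y then e else 0) : x = y ∧ d = e := by
  have h1 := h y
  rw [if_pos rfl] at h1
  by_cases hxy : y = x
  · rw [if_pos hxy] at h1; exact ⟨hxy.symm, h1⟩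
  · rw [if_neg hxy] at h1; exact absurd h1.symm he

lemma cross_up {a : ℕ → ℕ} {i : ℕ} : ∀ N, (∀ k < N, a k ≤ a (k + 1)) →
    ((∃ k < N, a k < i ∧ i ≤ a (k + 1)) ↔ a 0 < i ∧ i ≤ a N) := by
  intro N
  induction N with
  | zero =>
    intro _
    constructor
    · rintro ⟨k, hk, _⟩; omega
    · rintro ⟨h1, h2⟩; omega
  | succ N ih =>
    intro hm
    have ih' := ih fun k hk => hm k (by omega)
    have hle : ∀ k ≤ N, a 0 ≤ a k := by
      intro k
      induction k with
      | zero => intro _; exact le_rfl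
      | succ k ihk => intro hk; exact (ihk (by omega)).trans (hm k (by omega))
    have h0 := hle N le_rfl
    have hN := hm N (by omega)
    constructor
    · rintro ⟨k, hk, h1, h2⟩
      rcases Nat.lt_or_ge k N with hk' | hk'
      · have := ih'.1 ⟨k, hk', h1, h2⟩; omega
      · obtain rfl : k = N := by omega
        omega
    · rintro ⟨h1, h2⟩
      by_cases h3 : i ≤ a N
      · obtain ⟨k, hk, h⟩ := ih'.2 ⟨h1, h3⟩
        exact ⟨k, by omega, h⟩
      · exact ⟨N, by omega, by omega, h2⟩

lemma cross_down {a : ℕ → ℕ} {i : ℕ} : ∀ N, (∀ k < N, a (k + 1) ≤ a k) →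
    ((∃ k < N, a (k + 1) < i ∧ i ≤ a k) ↔ a N < i ∧ i ≤ a 0) := by
  intro N
  induction N with
  | zero =>
    intro _
    constructor
    · rintro ⟨k, hk, _⟩; omega
    · rintro ⟨h1, h2⟩; omega
  | succ N ih =>
    intro hm
    have ih' := ih fun k hk => hm k (by omega)
    have hle : ∀ k ≤ N, a k ≤ a 0 := by
      intro k
      induction k with
      | zero => intro _; exact le_rfl
      | succ k ihk => intro hk; exact (hm k (by omega)).trans (ihk (by omega))
    have h0 := hle N le_rfl
    have hN := hm N (by omega)
    constructor
    · rintro ⟨k, hk, h1, h2⟩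
      rcases Nat.lt_or_ge k N with hk' | hk'
      · have := ih'.1 ⟨k, hk', h1, h2⟩; omega
      · obtain rfl : k = N := by omega
        omega
    · rintro ⟨h1, h2⟩
      by_cases h3 : a N < i
      · obtain ⟨k, hk, h⟩ := ih'.2 ⟨h3, h2⟩
        exact ⟨k, by omega, h⟩
      · exact ⟨N, by omega, by omega, by omega⟩

lemma cells {r t : ℕ} {δ : ℕ → ℤ} {S : ℕ → GP r} (h : Osc r t δ S) (hr : 0 < r) (w : ℕ) (hw : w < t) :
    ∃ a : ℕ → ℕ, (∀ k, a k < r) ∧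
      (δ w = 1 → a 0 = 0 ∧ ∀ k, a k ≤ a (k + 1)) ∧
      (δ w = -1 → a 0 = r - 1 ∧ ∀ k, a (k + 1) ≤ a k) ∧
      (∀ k j, row S w (k + 1) j = row S (w + 1) k j + if j = a k then δ w else 0) ∧
      ∀ i k, w + k + 2 ≤ t → (recorded r t S i (w + 1) (w + k + 2) ↔
        (δ w = 1 ∧ a k < i ∧ i ≤ a (k + 1)) ∨ (δ w = -1 ∧ a (k + 1) < i ∧ i ≤ a k)) := by
  obtain ⟨-, j2, -⟩ := rows h hr w hw.le
  obtain ⟨-, i2, i3⟩ := rows h hr (w + 1) hw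
  obtain ⟨a, a1, a2, a3, a4⟩ := i3 w rfl
  refine ⟨a, a1, a2, a3, a4, fun i k hk => ?_⟩
  unfold recorded
  rw [show w + 1 - 1 = w by omega, show w + k + 2 - (w + 1) = k + 1 by omega,
    show k + 1 - 1 = k by omega]
  have x1 := j2 (k + 1) (by omega)
  have x2 := j2 (k + 1 + 1) (by omega)
  have y1 := i2 k (by omega)
  have y2 := i2 (k + 1) (by omega)
  constructor
  · rintro ⟨A, B, ⟨e1, e2, e3, e4⟩ | ⟨e1, e2, e3, e4⟩⟩
    · have f1 : a k = A ∧ δ w = 1 := single_eq one_ne_zero fun j => by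
        have := x1 j; rw [e1, ext_add, ext_eV, y1, a4] at this; linarith
      have f2 : a (k + 1) = B ∧ δ w = 1 := single_eq one_ne_zero fun j => by
        have := x2 j; rw [e2, ext_add, ext_eV, y2, a4] at this; linarith
      left; exact ⟨f1.2, by omega, by omega⟩
    · have f1 : a k = A ∧ -δ w = 1 := single_eq one_ne_zero fun j => by
        have := y1 j; rw [e1, ext_add, ext_eV, x1, a4] at this
        split_ifs at this ⊢ <;> linarith
      have f2 : a (k + 1) = B ∧ -δ w = 1 := single_eq one_ne_zero fun j => by
        have := y2 j; rw [e2, ext_add, ext_eV, x2, a4] at this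
        split_ifs at this ⊢ <;> linarith
      right; exact ⟨by omega, by omega, by omega⟩
  · rintro (⟨e1, e2, e3⟩ | ⟨e1, e2, e3⟩)
    · refine ⟨⟨a k, a1 _⟩, ⟨a (k + 1), a1 _⟩, Or.inl ⟨?_, ?_, e2, e3⟩⟩
      · apply ext_inj; intro j; rw [ext_add, ext_eV, x1, y1, a4, e1]
      · apply ext_inj; intro j; rw [ext_add, ext_eV, x2, y2, a4, e1]
    · refine ⟨⟨a k, a1 _⟩, ⟨a (k + 1), a1 _⟩, Or.inr ⟨?_, ?_, e2, e3⟩⟩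
      · apply ext_inj; intro j; rw [ext_add, ext_eV, x1, y1, a4, e1]
        simp only; split_ifs <;> ring
      · apply ext_inj; intro j; rw [ext_add, ext_eV, x2, y2, a4, e1]
        simp only; split_ifs <;> ring

lemma row_end {r t : ℕ} {δ : ℕ → ℤ} {S : ℕ → GP r} (h : Osc r t δ S) (hr : 0 < r) {m : ℤ}
    (hm : ∀ i, S t i = m) {u : ℕ} (hu : u ≤ t) {j : ℕ} (hj : j < r) :
    row S u (t - u) j = m - ext (S u) (r - 1 - j) := by
  have hmm : ∀ j < r, ext (S t) j = m := fun j hj => by rw [ext_of_lt _ hj, hm]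
  unfold row
  rw [ww_lowest hr (h.gd hr u) (t - u) _ hj]
  · simp only [pth]
    rw [show u + (t - u) = t by omega, hmm _ (by omega)]
  · intro v j hj
    simp only [Rv, pth]
    rw [if_pos hj, if_pos (show j < r by omega)]
    have := ext_dom (h.anti (u + (t - u - v))) (j := r - 1 - (j + 1)) (by omega)
    rw [show r - 1 - (j + 1) + 1 = r - 1 - j by omega] at this
    rw [show u + (t - u) = t by omega, hmm _ (by omega), hmm _ (by omega)]
    omega

lemma row_data {r t : ℕ} {δ : ℕ → ℤ} {S : ℕ → GP r} (h : Osc r t δ S) (hr : 0 < r) (w : ℕ) (hw : w < t)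
    (x : Fin r) (hx : ∀ j, S (w + 1) j = S w j + if j = x then δ w else 0) (i : ℕ) (hi : 1 ≤ i)
    (hir : i ≤ r - 1) :
    (∃ v, w + 1 < v ∧ v ≤ t ∧ recorded r t S i (w + 1) v) ↔
      (δ w = 1 ∧ i ≤ r - 1 - x) ∨ (δ w = -1 ∧ r - 1 - x < i) := by
  obtain ⟨a, a1, a2, a3, a4, a5⟩ := cells h hr w hw
  obtain ⟨m, hm⟩ := h.rect
  have hxr := x.2
  have hend : a (t - w - 1) = r - 1 - x := by
    have e := a4 (t - w - 1) (r - 1 - x)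
    rw [show t - w - 1 + 1 = t - w by omega, row_end h hr hm hw.le (by omega),
      show t - w - 1 = t - (w + 1) by omega, row_end h hr hm hw (by omega),
      show r - 1 - (r - 1 - (x : ℕ)) = x by omega, ext_fin, ext_fin, hx, if_pos rfl] at e
    by_contra hne
    rw [show t - w - 1 = t - (w + 1) by omega] at hne
    rw [if_neg (fun hh => hne hh.symm)] at e
    have := h.sg w hw
    omega
  have hre : (∃ v, w + 1 < v ∧ v ≤ t ∧ recorded r t S i (w + 1) v) ↔
      ∃ k < t - w - 1, (δ w = 1 ∧ a k < i ∧ i ≤ a (k + 1)) ∨ (δ w = -1 ∧ a (k + 1) < i ∧ i ≤ a k) := by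
    constructor
    · rintro ⟨v, h1, h2, h3⟩
      refine ⟨v - w - 2, by omega, (a5 i (v - w - 2) (by omega)).1 ?_⟩
      rwa [show w + (v - w - 2) + 2 = v by omega]
    · rintro ⟨k, hk, h3⟩
      exact ⟨w + k + 2, by omega, by omega, (a5 i k (by omega)).2 h3⟩
  rw [hre]
  rcases h.sg w hw with hd | hd
  · have := cross_up (a := a) (i := i) (t - w - 1) (fun k _ => (a2 hd).2 k)
    simp only [hd, true_and, show ¬ ((1 : ℤ) = -1) by norm_num, false_and, or_false]
    rw [this, (a2 hd).1, hend]; omega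
  · have := cross_down (a := a) (i := i) (t - w - 1) (fun k _ => (a3 hd).2 k)
    simp only [hd, true_and, show ¬ ((-1 : ℤ) = 1) by norm_num, false_and, false_or]
    rw [this, (a3 hd).1, hend]; omega

lemma four_same {ε : ℤ} (hε : ε = 1 ∨ ε = -1) {a p q b : ℕ}
    (h : ∀ j : ℕ, (if j = a then ε else 0) + (if j = p then ε else 0) =
      (if j = q then ε else 0) + (if j = b then ε else 0)) :
    (a = q ∧ p = b) ∨ (a = b ∧ p = q) := by
  have hne : ε ≠ 0 := by omega
  by_cases c1 : a = q
  · left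
    refine ⟨c1, (single_eq (d := ε) hne fun j => ?_).1⟩
    have := h j
    rw [c1] at this
    linarith
  · have h1 := h a
    rw [if_pos rfl, if_neg c1] at h1
    by_cases c2 : a = b
    · right
      refine ⟨c2, (single_eq (d := ε) hne fun j => ?_).1⟩
      have := h j
      rw [c2] at this
      linarith
    · rw [if_neg c2] at h1
      split_ifs at h1 <;> omega

lemma four_opp {ε δ : ℤ} (hε : ε = 1 ∨ ε = -1) (hδ : δ = -ε) {a p q b : ℕ}
    (h : ∀ j : ℕ, (if j = a then ε else 0) + (if j = p then δ else 0) =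
      (if j = q then δ else 0) + (if j = b then ε else 0)) :
    (a = p ∧ q = b) ∨ (a = b ∧ q = p) := by
  refine four_same hε fun j => ?_
  have h1 := h j
  have e : ∀ y : ℕ, (if j = y then δ else 0) = - (if j = y then ε else 0) := by
    intro y; rw [hδ]; split_ifs <;> simp
  rw [e, e] at h1
  linarith

lemma col_data {r t : ℕ} {δ : ℕ → ℤ} {S : ℕ → GP r} (h : Osc r t δ S) (hr : 0 < r) (z : ℕ) (hz : z < t)
    (x : Fin r) (hx : ∀ j, S (z + 1) j = S z j + if j = x then δ z else 0) (i : ℕ) (hi : 1 ≤ i)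
    (hir : i ≤ r - 1) :
    (∃ u, 1 ≤ u ∧ u < z + 1 ∧ recorded r t S i u (z + 1)) ↔
      (δ z = 1 ∧ i ≤ x) ∨ (δ z = -1 ∧ (x : ℕ) < i) := by
  choose p hp hpe using fun u => (h.gdr hr u).step (z - u)
  have hpe' : ∀ u ≤ z, ∀ j, row S u (z - u + 1) j =
      row S u (z - u) j + if j = p u then δ z else 0 := by
    intro u hu j
    rw [hpe u j]
    simp only [show u + (z - u) = z by omega]
  have hsz := h.sg z hz
  have p0 : p 0 = x := by
    refine (single_eq (d := δ z) (e := δ z) (by omega) fun j => ?_).1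
    have e := hpe' 0 (by omega) j
    rw [h.row_zero, h.row_zero, Nat.sub_zero] at e
    by_cases hj : j < r
    · have e2 := hx ⟨j, hj⟩
      rw [ext_of_lt _ hj, ext_of_lt _ hj, e2] at e
      simp only [Fin.ext_iff] at e
      linarith
    · have := hp 0
      have := x.2
      rw [if_neg (by omega), if_neg (by omega)]
  have hdz := (rows h hr z hz.le).1 1
  have ez : ∀ j, row S z 1 j = if j = p z then δ z else 0 := by
    intro j
    have e := hpe' z le_rfl j
    rw [Nat.sub_self, zero_add, (h.gdr hr z).zero, zero_add] at e
    exact e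
  have main : ∀ w < z, (δ z = 1 → p (w + 1) ≤ p w) ∧ (δ z = -1 → p w ≤ p (w + 1)) ∧
      (recorded r t S i (w + 1) (z + 1) ↔
        (δ z = 1 ∧ p (w + 1) < i ∧ i ≤ p w) ∨ (δ z = -1 ∧ p w < i ∧ i ≤ p (w + 1))) := by
    intro w hw
    obtain ⟨a, a1, a2, a3, a4, a5⟩ := cells h hr w (by omega)
    obtain ⟨k, hk⟩ : ∃ k, z = w + k + 1 := ⟨z - w - 1, by omega⟩
    have hrec := a5 i k (by omega)
    rw [show w + k + 2 = z + 1 by omega] at hrec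
    rw [hrec]
    have b1 := hpe' w (by omega)
    have b2 := hpe' (w + 1) (by omega)
    rw [show z - w = k + 1 by omega] at b1
    rw [show z - (w + 1) = k by omega] at b2
    have hfour : ∀ j : ℕ, (if j = a k then δ w else 0) + (if j = p w then δ z else 0) =
      (if j = p (w + 1) then δ z else 0) + (if j = a (k + 1) then δ w else 0) := by
      intro j
      have c1 := a4 k j
      have c2 := a4 (k + 1) j
      have c3 := b1 j
      have c4 := b2 j
      linarith
    have hsw := h.sg w (by omega)
    have m1 : δ w = 1 → a k ≤ a (k + 1) := fun hh => (a2 hh).2 k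
    have m2 : δ w = -1 → a (k + 1) ≤ a k := fun hh => (a3 hh).2 k
    by_cases hs : δ z = δ w
    · rw [hs] at hfour ⊢
      have := four_same hsw hfour
      omega
    · have := four_opp hsw (by omega) hfour
      omega
  have hre : (∃ u, 1 ≤ u ∧ u < z + 1 ∧ recorded r t S i u (z + 1)) ↔
      ∃ w < z, (δ z = 1 ∧ p (w + 1) < i ∧ i ≤ p w) ∨ (δ z = -1 ∧ p w < i ∧ i ≤ p (w + 1)) := by
    constructor
    · rintro ⟨u, h1, h2, h3⟩
      refine ⟨u - 1, by omega, (main (u - 1) (by omega)).2.2.1 ?_⟩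
      rwa [show u - 1 + 1 = u by omega]
    · rintro ⟨w, hw, h3⟩
      exact ⟨w + 1, by omega, by omega, (main w hw).2.2.2 h3⟩
  rw [hre]
  rcases hsz with hd | hd
  · have hpz := dom_first_pos (hp z) hdz (by rw [hd] at ez; exact ez)
    have := cross_down (a := p) (i := i) z (fun k hk => (main k hk).1 hd)
    simp only [hd, true_and, show ¬ ((1 : ℤ) = -1) by norm_num, false_and, or_false]
    rw [this, p0, hpz]; omega
  · have hpz := dom_first_neg (hp z) hdz (by rw [hd] at ez; exact ez)
    have := cross_up (a := p) (i := i) z (fun k hk => (main k hk).2.1 hd)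
    simp only [hd, true_and, show ¬ ((-1 : ℤ) = 1) by norm_num, false_and, false_or]
    rw [this, p0, hpz]; omega

/-- Two oscillating tableaux with the same signs and half of the recorded data agree. -/
lemma osc_unique {r t : ℕ} {δ : ℕ → ℤ} {S S' : ℕ → GP r} (h : Osc r t δ S) (h' : Osc r t δ S')
    (hrec : ∀ i, 1 ≤ i → i ≤ r / 2 → i ≤ r - 1 → ∀ u v, 1 ≤ u → u < v → v ≤ t →
      (recorded r t S i u v ↔ recorded r t S' i u v)) :
    ∀ k ≤ t, S k = S' k := by
  intro k
  induction k with
  | zero => intro _; rw [h.zero, h'.zero]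
  | succ w ih =>
    intro hw
    have e := ih (by omega)
    obtain ⟨x, hx⟩ := h.step w (by omega)
    obtain ⟨x', hx'⟩ := h'.step w (by omega)
    have hr : 0 < r := by have := x.2; omega
    have hxr := x.2
    have hxr' := x'.2
    have key : ∀ i, 1 ≤ i → i ≤ r / 2 → i ≤ r - 1 →
        ((i ≤ r - 1 - x ↔ i ≤ r - 1 - x') ∧ (i ≤ x ↔ i ≤ (x' : ℕ))) := by
      intro i h1 h2 h3
      have c1 := row_data h hr w (by omega) x hx i h1 h3
      have c2 := row_data h' hr w (by omega) x' hx' i h1 h3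
      have c3 := col_data h hr w (by omega) x hx i h1 h3
      have c4 := col_data h' hr w (by omega) x' hx' i h1 h3
      have d1 : (∃ v, w + 1 < v ∧ v ≤ t ∧ recorded r t S i (w + 1) v) ↔
          (∃ v, w + 1 < v ∧ v ≤ t ∧ recorded r t S' i (w + 1) v) := by
        constructor
        · rintro ⟨v, v1, v2, v3⟩
          exact ⟨v, v1, v2, (hrec i h1 h2 h3 _ _ (by omega) v1 v2).1 v3⟩
        · rintro ⟨v, v1, v2, v3⟩
          exact ⟨v, v1, v2, (hrec i h1 h2 h3 _ _ (by omega) v1 v2).2 v3⟩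
      have d2 : (∃ u, 1 ≤ u ∧ u < w + 1 ∧ recorded r t S i u (w + 1)) ↔
          (∃ u, 1 ≤ u ∧ u < w + 1 ∧ recorded r t S' i u (w + 1)) := by
        constructor
        · rintro ⟨v, v1, v2, v3⟩
          exact ⟨v, v1, v2, (hrec i h1 h2 h3 _ _ v1 v2 hw).1 v3⟩
        · rintro ⟨v, v1, v2, v3⟩
          exact ⟨v, v1, v2, (hrec i h1 h2 h3 _ _ v1 v2 hw).2 v3⟩
      rw [c1, c2] at d1
      rw [c3, c4] at d2
      have := h.sg w (by omega)
      omega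
    have hxx : x = x' := by
      rw [Fin.ext_iff]
      have k1 := key (x + 1) (by omega)
      have k2 := key (x' + 1) (by omega)
      have k3 := key (r - 1 - x)
      have k4 := key (r - 1 - x')
      by_contra hne
      rcases Nat.lt_or_gt_of_ne hne with hlt | hlt
      · by_cases hh : (x : ℕ) + 1 ≤ r / 2
        · have := k1 hh (by omega); omega
        · have := k3 (by omega) (by omega) (by omega); omega
      · by_cases hh : (x' : ℕ) + 1 ≤ r / 2
        · have := k2 hh (by omega); omega
        · have := k4 (by omega) (by omega) (by omega); omega
    funext j
    rw [hx, hx', e, hxx]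
/-! Oscillization -/

lemma rank_hit {r : ℕ} (A : Finset (Fin r)) (f : Fin r → ℕ) (hinj : ∀ x ∈ A, ∀ y ∈ A, f x = f y → x = y)
    (hf : ∀ x ∈ A, 1 ≤ f x ∧ f x ≤ A.card) {j : ℕ} (hj : j < A.card) :
    ∃ q ∈ A, ∀ x ∈ A, f x = j + 1 ↔ x = q := by
  have himg : A.image f = Finset.Icc 1 A.card := by
    apply Finset.eq_of_subset_of_card_le
    · intro y hy
      rw [Finset.mem_image] at hy
      obtain ⟨x, hx, rfl⟩ := hy
      rw [Finset.mem_Icc]; exact hf x hx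
    · rw [Finset.card_image_of_injOn (fun x hx y hy => hinj x hx y hy)]
      simp
  have : j + 1 ∈ A.image f := by rw [himg, Finset.mem_Icc]; omega
  rw [Finset.mem_image] at this
  obtain ⟨q, hq, e⟩ := this
  refine ⟨q, hq, fun x hx => ⟨fun hh => hinj x hx q hq (by omega), fun hh => by rw [hh, e]⟩⟩

lemma rank_le {r : ℕ} (A : Finset (Fin r)) :
    (∀ x ∈ A, ∀ y, x < y → y ∈ A → (A.filter fun i => i ≤ x).card < (A.filter fun i => i ≤ y).card) ∧
    ∀ x ∈ A, 1 ≤ (A.filter fun i => i ≤ x).card ∧ (A.filter fun i => i ≤ x).card ≤ A.card := by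
  refine ⟨fun x hx y hxy hy => ?_, fun x hx => ⟨?_, Finset.card_filter_le _ _⟩⟩
  · apply Finset.card_lt_card
    rw [Finset.ssubset_iff_of_subset]
    · exact ⟨y, by simp [hy], by simp [hxy]⟩
    · intro z hz
      simp only [Finset.mem_filter] at hz ⊢
      exact ⟨hz.1, hz.2.trans hxy.le⟩
  · rw [Nat.succ_le_iff, Finset.card_pos]
    exact ⟨x, by simp [hx]⟩

lemma rank_ge {r : ℕ} (A : Finset (Fin r)) :
    (∀ x ∈ A, ∀ y, x < y → y ∈ A → (A.filter fun i => y ≤ i).card < (A.filter fun i => x ≤ i).card) ∧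
    ∀ x ∈ A, 1 ≤ (A.filter fun i => x ≤ i).card ∧ (A.filter fun i => x ≤ i).card ≤ A.card := by
  refine ⟨fun x hx y hxy hy => ?_, fun x hx => ⟨?_, Finset.card_filter_le _ _⟩⟩
  · apply Finset.card_lt_card
    rw [Finset.ssubset_iff_of_subset]
    · exact ⟨x, by simp [hx], by simp [hxy]⟩
    · intro z hz
      simp only [Finset.mem_filter] at hz ⊢
      exact ⟨hz.1, hxy.le.trans hz.2⟩
  · rw [Nat.succ_le_iff, Finset.card_pos]
    exact ⟨x, by simp [hx]⟩

lemma supp_add {r : ℕ} (μ : GP r) (A : Finset (Fin r)) :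
    (Finset.univ.filter fun i => (μ + indV A) i ≠ μ i) = A := by
  ext i; simp [indV]

lemma supp_sub {r : ℕ} (μ : GP r) (A : Finset (Fin r)) :
    (Finset.univ.filter fun i => (μ - indV A) i ≠ μ i) = A := by
  ext i; simp [indV]

lemma osc_add {r : ℕ} (μ : GP r) (A : Finset (Fin r)) (j : ℕ) (i : Fin r) :
    oscStep μ (μ + indV A) j i =
      μ i + if i ∈ A ∧ (A.filter fun i' => i' ≤ i).card ≤ j then 1 else 0 := by
  unfold oscStep
  simp only [supp_add]
  by_cases hi : i ∈ A
  · have : μ i < (μ + indV A) i := by simp [indV, hi]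
    simp only [hi, true_and, if_pos this]
    split_ifs
    · simp [indV, hi]
    · simp
  · simp [hi]

lemma osc_sub {r : ℕ} (μ : GP r) (A : Finset (Fin r)) (j : ℕ) (i : Fin r) :
    oscStep μ (μ - indV A) j i =
      μ i - if i ∈ A ∧ (A.filter fun i' => i ≤ i').card ≤ j then 1 else 0 := by
  unfold oscStep
  simp only [supp_sub]
  by_cases hi : i ∈ A
  · have : ¬ μ i < (μ - indV A) i := by simp [indV, hi]
    simp only [hi, true_and, if_neg this]
    split_ifs
    · simp [indV, hi]
    · simp
  · simp [hi]

lemma osc_spec {r : ℕ} {c : ℤ} {μ lam : GP r} (h : colStep r c μ lam) (hμ : Antitone μ)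
    (hl : Antitone lam) :
    (Finset.univ.filter fun i : Fin r => lam i ≠ μ i).card = c.natAbs ∧
    oscStep μ lam 0 = μ ∧ oscStep μ lam c.natAbs = lam ∧ (∀ j, Antitone (oscStep μ lam j)) ∧
    ∀ j < c.natAbs, ∃ q, ∀ i, oscStep μ lam (j + 1) i = oscStep μ lam j i +
      if i = q then (if 0 ≤ c then 1 else -1) else 0 := by
  obtain ⟨A, hA, h⟩ := h
  by_cases hc : 0 ≤ c
  · rw [if_pos hc] at h
    subst h
    obtain ⟨k1, k2⟩ := rank_le A
    rw [supp_add]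
    refine ⟨hA, ?_, ?_, ?_, ?_⟩
    · funext i
      rw [osc_add, if_neg, add_zero]
      rintro ⟨h1, h2⟩
      have := k2 i h1; omega
    · funext i
      rw [osc_add]
      by_cases hi : i ∈ A
      · rw [if_pos ⟨hi, hA ▸ (k2 i hi).2⟩]; simp [indV, hi]
      · simp [indV, hi]
    · intro j x y hxy
      have h1 := hμ hxy
      have h2 := hl hxy
      simp only [Pi.add_apply, indV] at h2
      rw [osc_add, osc_add]
      by_cases hy : y ∈ A
      · by_cases hx : x ∈ A
        · have : (A.filter fun i => i ≤ x).card ≤ (A.filter fun i => i ≤ y).card := by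
            rcases hxy.lt_or_eq with hlt | heq
            · exact (k1 x hx y hlt hy).le
            · rw [heq]
          simp only [hx, hy, true_and]
          split_ifs <;> omega
        · rw [if_pos hy, if_neg hx] at h2
          simp only [hx, hy, true_and, false_and, if_false]
          split_ifs <;> omega
      · simp only [hy, false_and, if_false]
        split_ifs <;> omega
    · intro j hj
      obtain ⟨q, hq, e⟩ := rank_hit A (fun x => (A.filter fun i => i ≤ x).card) (by
        intro x hx y hy hh
        by_contra hne
        rcases lt_or_gt_of_ne hne with hlt | hlt
        · exact absurd hh (k1 x hx y hlt hy).ne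
        · exact absurd hh.symm (k1 y hy x hlt hx).ne) k2 (hA ▸ hj)
      refine ⟨q, fun i => ?_⟩
      rw [osc_add, osc_add, if_pos hc]
      by_cases hi : i ∈ A
      · have e' := e i hi
        simp only [hi, true_and]
        by_cases hiq : i = q
        · rw [if_pos hiq, if_pos (by have := e'.2 hiq; omega),
            if_neg (by have := e'.2 hiq; omega)]; ring
        · have hne : ¬ (A.filter fun i' => i' ≤ i).card = j + 1 := fun hh => hiq (e'.1 hh)
          rw [if_neg hiq]
          split_ifs <;> omega
      · have hiq : i ≠ q := fun hh => hi (hh ▸ hq)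
        simp [hi, hiq]
  · rw [if_neg hc] at h
    subst h
    obtain ⟨k1, k2⟩ := rank_ge A
    rw [supp_sub]
    refine ⟨hA, ?_, ?_, ?_, ?_⟩
    · funext i
      rw [osc_sub, if_neg, sub_zero]
      rintro ⟨h1, h2⟩
      have := k2 i h1; omega
    · funext i
      rw [osc_sub]
      by_cases hi : i ∈ A
      · rw [if_pos ⟨hi, hA ▸ (k2 i hi).2⟩]; simp [indV, hi]
      · simp [indV, hi]
    · intro j x y hxy
      have h1 := hμ hxy
      have h2 := hl hxy
      simp only [Pi.sub_apply, indV] at h2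
      rw [osc_sub, osc_sub]
      by_cases hx : x ∈ A
      · by_cases hy : y ∈ A
        · have : (A.filter fun i => y ≤ i).card ≤ (A.filter fun i => x ≤ i).card := by
            rcases hxy.lt_or_eq with hlt | heq
            · exact (k1 x hx y hlt hy).le
            · rw [heq]
          simp only [hx, hy, true_and]
          split_ifs <;> omega
        · rw [if_pos hx, if_neg hy] at h2
          simp only [hx, hy, true_and, false_and, if_false]
          split_ifs <;> omega
      · simp only [hx, false_and, if_false]
        split_ifs <;> omega
    · intro j hj
      obtain ⟨q, hq, e⟩ := rank_hit A (fun x => (A.filter fun i => x ≤ i).card) (by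
        intro x hx y hy hh
        by_contra hne
        rcases lt_or_gt_of_ne hne with hlt | hlt
        · exact absurd hh.symm (k1 x hx y hlt hy).ne
        · exact absurd hh (k1 y hy x hlt hx).ne) k2 (hA ▸ hj)
      refine ⟨q, fun i => ?_⟩
      rw [osc_sub, osc_sub, if_neg hc]
      by_cases hi : i ∈ A
      · have e' := e i hi
        simp only [hi, true_and]
        by_cases hiq : i = q
        · rw [if_pos hiq, if_pos (by have := e'.2 hiq; omega),
            if_neg (by have := e'.2 hiq; omega)]; ring
        · have hne : ¬ (A.filter fun i' => i ≤ i').card = j + 1 := fun hh => hiq (e'.1 hh)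
          rw [if_neg hiq]
          split_ifs <;> omega
      · have hiq : i ≠ q := fun hh => hi (hh ▸ hq)
        simp [hi, hiq]

/-- Block index determined by the type. -/
def cIdx (n : ℕ) (c : ℕ → ℤ) (k : ℕ) : ℕ :=
  ((Finset.range (n + 1)).filter fun j => cumC c j ≤ k).sup id

lemma cumC_mono (c : ℕ → ℤ) {i j : ℕ} (h : i ≤ j) : cumC c i ≤ cumC c j :=
  Finset.sum_le_sum_of_subset (Finset.range_subset_range.mpr h)

lemma cumC_succ (c : ℕ → ℤ) (j : ℕ) : cumC c (j + 1) = cumC c j + (c j).natAbs :=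
  Finset.sum_range_succ _ _

lemma cIdx_spec (n : ℕ) (c : ℕ → ℤ) (k : ℕ) :
    cIdx n c k ≤ n ∧ cumC c (cIdx n c k) ≤ k ∧ ∀ j ≤ n, cumC c j ≤ k → j ≤ cIdx n c k := by
  have hne : ((Finset.range (n + 1)).filter fun j => cumC c j ≤ k).Nonempty :=
    ⟨0, by rw [Finset.mem_filter]; exact ⟨by simp, by simp [cumC]⟩⟩
  obtain ⟨b, hb, e⟩ := Finset.exists_mem_eq_sup _ hne id
  simp only [Finset.mem_filter, Finset.mem_range, id] at hb e
  have e' : cIdx n c k = b := e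
  refine ⟨by omega, by rw [e']; exact hb.2, fun j hj hk => ?_⟩
  exact Finset.le_sup (f := id) (s := (Finset.range (n + 1)).filter fun j => cumC c j ≤ k)
    (by simp only [Finset.mem_filter, Finset.mem_range]; omega)

section
variable {r n : ℕ} {T : ℕ → GP r} {c : ℕ → ℤ}

lemma ft_spec (hT : IsFT r n T c) {j : ℕ} (hj : j < n) :
    (Finset.univ.filter fun i : Fin r => T (j + 1) i ≠ T j i).card = (c j).natAbs ∧
    oscStep (T j) (T (j + 1)) 0 = T j ∧ oscStep (T j) (T (j + 1)) (c j).natAbs = T (j + 1) ∧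
    (∀ d, Antitone (oscStep (T j) (T (j + 1)) d)) ∧
    ∀ d < (c j).natAbs, ∃ q, ∀ i, oscStep (T j) (T (j + 1)) (d + 1) i =
      oscStep (T j) (T (j + 1)) d i + if i = q then (if 0 ≤ c j then 1 else -1) else 0 :=
  osc_spec (hT.1.2 j hj) (hT.1.1 j hj.le) (hT.1.1 (j + 1) hj)

lemma cum_eq (hT : IsFT r n T c) {j : ℕ} (hj : j ≤ n) : cum T j = cumC c j := by
  unfold cum cumC
  apply Finset.sum_congr rfl
  intro i hi
  rw [Finset.mem_range] at hi
  exact (ft_spec hT (j := i) (by omega)).1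

lemma stdIdx_eq (hT : IsFT r n T c) (k : ℕ) : stdIdx n T k = cIdx n c k := by
  unfold stdIdx cIdx
  congr 1
  apply Finset.filter_congr
  intro j hj
  rw [Finset.mem_range] at hj
  rw [cum_eq hT (by omega)]

lemma T_const (hT : IsFT r n T c) {i j : ℕ} (hij : i ≤ j) (hj : j ≤ n) (h : cumC c i = cumC c j) :
    T j = T i := by
  induction j, hij using Nat.le_induction with
  | base => rfl
  | succ j hij ih =>
    have h1 := cumC_mono c hij
    have h2 := cumC_succ c j
    obtain ⟨-, s2, s3, -⟩ := ft_spec hT (j := j) (by omega)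
    rw [show (c j).natAbs = 0 by omega, s2] at s3
    rw [← s3, ih (by omega) (by omega)]

lemma std_cum (hT : IsFT r n T c) {j : ℕ} (hj : j ≤ n) : stdT n T (cumC c j) = T j := by
  obtain ⟨h1, h2, h3⟩ := cIdx_spec n c (cumC c j)
  have h4 := h3 j hj le_rfl
  have h5 := cumC_mono c h4
  have h6 := T_const hT h4 h1 (by omega)
  unfold stdT
  rw [stdIdx_eq hT, cum_eq hT h1, show cumC c j - cumC c (cIdx n c (cumC c j)) = 0 by omega]
  split_ifs with hh
  · rw [← h6, hh]
  · rw [(ft_spec hT (j := cIdx n c (cumC c j)) (by omega)).2.1, h6]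

lemma std_mid (hT : IsFT r n T c) {j d : ℕ} (hj : j < n) (hd : d ≤ (c j).natAbs) :
    stdT n T (cumC c j + d) = oscStep (T j) (T (j + 1)) d := by
  have hs := cumC_succ c j
  obtain ⟨s1, s2, s3, s4, s5⟩ := ft_spec hT hj
  rcases hd.eq_or_lt with he | hlt
  · rw [he, ← hs, std_cum hT hj, s3]
  · obtain ⟨h1, h2, h3⟩ := cIdx_spec n c (cumC c j + d)
    have h4 := h3 j hj.le (by omega)
    have h5 : cIdx n c (cumC c j + d) = j := by
      by_contra hne
      have := cumC_mono c (show j + 1 ≤ cIdx n c (cumC c j + d) by omega)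
      omega
    unfold stdT
    rw [stdIdx_eq hT, h5, if_neg (by omega), cum_eq hT hj.le, show cumC c j + d - cumC c j = d by omega]

lemma std_osc (hT : IsFT r n T c) (hrect : Rect r n T) {t : ℕ} (ht : t = cumC c n) :
    Osc r t (fun k => if k < t then (if 0 ≤ c (cIdx n c k) then 1 else -1) else 0) (stdT n T) := by
  have hbig : ∀ k ≥ t, stdT n T k = T n := by
    intro k hk
    obtain ⟨h1, h2, h3⟩ := cIdx_spec n c k
    have := h3 n le_rfl (by omega)
    unfold stdT
    rw [stdIdx_eq hT, if_pos (by omega)]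
  have hsmall : ∀ k < t, ∃ d, cIdx n c k < n ∧ d < (c (cIdx n c k)).natAbs ∧
      k = cumC c (cIdx n c k) + d := by
    intro k hk
    obtain ⟨h1, h2, h3⟩ := cIdx_spec n c k
    have h4 : cIdx n c k < n := by
      by_contra hh
      have := cumC_mono c (show n ≤ cIdx n c k by omega)
      omega
    refine ⟨k - cumC c (cIdx n c k), h4, ?_, by omega⟩
    by_contra hh
    have := cumC_succ c (cIdx n c k)
    have := h3 (cIdx n c k + 1) h4 (by omega)
    omega
  refine ⟨?_, ?_, ?_, ?_, ?_, ?_, ?_⟩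
  · have := std_cum hT (Nat.zero_le n)
    rw [show cumC c 0 = 0 by simp [cumC]] at this
    rw [this, hT.2]
  · intro k
    rcases Nat.lt_or_ge k t with hk | hk
    · obtain ⟨d, h1, h2, h3⟩ := hsmall k hk
      rw [h3, std_mid hT h1 h2.le]
      exact (ft_spec hT h1).2.2.2.1 d
    · rw [hbig k hk]; exact hT.1.1 n le_rfl
  · intro k hk
    simp only [if_pos hk]
    split_ifs <;> simp
  · intro k hk
    simp only [if_neg (show ¬ k < t by omega)]
  · intro k hk
    obtain ⟨d, h1, h2, h3⟩ := hsmall k hk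
    obtain ⟨q, e⟩ := (ft_spec hT h1).2.2.2.2 d h2
    refine ⟨q, fun j => ?_⟩
    simp only [if_pos hk]
    have e1 := std_mid hT h1 h2.le
    have e2 := std_mid hT h1 (show d + 1 ≤ _ from h2)
    rw [← h3] at e1
    rw [← add_assoc, ← h3] at e2
    rw [e1, e2, e j]
  · intro k hk
    rw [hbig k hk, hbig t le_rfl]
  · obtain ⟨m, hm⟩ := hrect
    exact ⟨m, fun i => by rw [hbig t le_rfl]; exact hm i⟩

end

/-- **Corollary.** A rectangular fluctuating tableau is uniquely determined by its type
together with the promotion permutations `prom_i` for `1 ≤ i ≤ ⌊r/2⌋`. -/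
theorem tableau_determined_by_promotion_permutations
    (r n t : ℕ) (T T' : ℕ → GP r) (c : ℕ → ℤ)
    (hT : IsFT r n T c) (hT' : IsFT r n T' c)
    (hrect : Rect r n T) (hrect' : Rect r n T')
    (ht : t = ∑ j ∈ Finset.range n, (c j).natAbs) (ht1 : 1 ≤ t)
    (h : ∀ i, 1 ≤ i → i ≤ r / 2 → ∀ u v, PMmem r n t T i u v ↔ PMmem r n t T' i u v) :
    ∀ k ≤ n, T k = T' k := by
  have ht' : t = cumC c n := ht
  have o := std_osc hT hrect ht'
  have o' := std_osc hT' hrect' ht'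
  have key := osc_unique o o' (by
    intro i h1 h2 h3 u v hu huv hv
    have hh := h i h1 h2 u v
    unfold PMmem at hh
    rw [if_pos huv] at hh
    constructor
    · intro hr
      exact (hh.1 ⟨hu, by omega, by omega, hv, by omega, h1, h3, hr⟩).2.2.2.2.2.2.2
    · intro hr
      exact (hh.2 ⟨hu, by omega, by omega, hv, by omega, h1, h3, hr⟩).2.2.2.2.2.2.2)
  intro k hk
  rw [← std_cum hT hk, ← std_cum hT' hk]
  exact key _ (by rw [ht']; exact cumC_mono c hk)

end FT
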